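/- arXiv:2404.16643 — 3 statements merged into one kernel-verified Lean document; each statement's English description precedes it below -/
import Mathlib

section
/- Let L be a finite lattice with minimum element 0̂, and let i₁, i₂ ≥ 1 be integers. If there is an element m ∈ L with H̃_{i₁+i₂−2}((0̂,m)) ≠ 0, then there exist elements n₁, n₂ ∈ L such that H̃_{i₁−2}((0̂,n₁)) ≠ 0, H̃_{i₂−2}((0̂,n₂)) ≠ 0, and n₁ ∨ n₂ ≥ m. -/
open Finsupp

noncomputable section

variable (K : Type) [Field K]

section Core
variable (P : Type) [Preorder P]

/-- Order chains with `n` elements of the poset `P`, written as strictly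
decreasing tuples `(x₀ > x₁ > ⋯ > x_{n-1})`. -/
def OChain (n : ℕ) : Type := {c : Fin n → P // StrictAnti c}

/-- The chain group in "level" `n`: the `K`-vector space with basis the order chains with
`n` elements.  Level `n` corresponds to homological degree `n - 1`; in particular
`CGrp K P 0 ≅ K` is the reduced part `C̃₋₁`. -/
abbrev CGrp (n : ℕ) : Type := OChain P n →₀ K

/-- Deletion of the `k`-th entry of an order chain. -/
def odel {n : ℕ} (k : Fin (n + 1)) (c : OChain P (n + 1)) : OChain P n :=
  ⟨c.1 ∘ k.succAbove, c.2.comp_strictMono (Fin.strictMono_succAbove k)⟩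

/-- The simplicial boundary map (of the reduced simplicial chain complex of the order
complex), from level `n+1` to level `n`. -/
def cbdry (n : ℕ) : CGrp K P (n + 1) →ₗ[K] CGrp K P n :=
  Finsupp.lsum K fun c => ∑ k : Fin (n + 1), ((-1 : K) ^ (k : ℕ)) • Finsupp.lsingle (odel P k c)

/-- The cycles in level `n` (every level-0 chain, i.e. multiple of the empty chain,
is a cycle). -/
def cyclesAt : (n : ℕ) → Submodule K (CGrp K P n)
  | 0 => ⊤
  | (n + 1) => LinearMap.ker (cbdry K P n)

/-- The boundaries in level `n`. -/
def boundariesIn (n : ℕ) : Submodule K (CGrp K P n) :=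
  LinearMap.range (cbdry K P n)

/-- `H̃_{n-1}(P) ≠ 0`: nontriviality of the reduced simplicial homology (with coefficients
in `K`) of the order complex of `P` in degree `n - 1` (level `n`). -/
def RHomNontrivial (n : ℕ) : Prop := ¬ cyclesAt K P n ≤ boundariesIn K P n

end Core

open scoped TensorProduct

section ListComplex

variable {K} {L : Type}

/-- Prepending `x`, on formal linear combinations of lists. -/
def consMap (x : L) : (List L →₀ K) →ₗ[K] (List L →₀ K) :=
  Finsupp.lmapDomain K K (List.cons x)

@[simp]
lemma consMap_single (x : L) (l : List L) (a : K) :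
    consMap x (single l a) = single (x :: l) a := by
  simp [consMap]

/-- The alternating sum of the lists obtained from a list by deleting one entry. -/
def listFaces : List L → (List L →₀ K)
  | [] => 0
  | x :: l => single l 1 - consMap x (listFaces l)

/-- The simplicial boundary map on formal linear combinations of lists of all lengths. -/
def listBdry : (List L →₀ K) →ₗ[K] (List L →₀ K) :=
  Finsupp.linearCombination K listFaces

@[simp]
lemma listBdry_single_nil (a : K) : listBdry (single ([] : List L) a) = 0 := by
  simp [listBdry, listFaces]

lemma listBdry_consMap (x : L) (c : List L →₀ K) :
    listBdry (consMap x c) = c - consMap x (listBdry c) := by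
  induction c using Finsupp.induction_linear with
  | zero => simp
  | add f g hf hg => simp only [map_add, hf, hg]; abel
  | single l a => simp [listBdry, listFaces, smul_sub]

lemma listBdry_single_cons (x : L) (l : List L) (a : K) :
    listBdry (single (x :: l) a) = single l a - consMap x (listBdry (single l a)) := by
  rw [← consMap_single, listBdry_consMap]

lemma listBdry_listBdry (c : List L →₀ K) : listBdry (listBdry c) = 0 := by
  induction c using Finsupp.induction_linear with
  | zero => simp
  | add f g hf hg => simp [hf, hg]
  | single l a =>
    induction l with
    | nil => simp
    | cons x l ih => simp [listBdry_single_cons, listBdry_consMap, ih]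

/-- A linear map sends chains supported in `s` into `N` as soon as it does so on the basis. -/
lemma map_mem_of_mem_supported {α M : Type*} [AddCommMonoid M] [Module K M]
    (f : (α →₀ K) →ₗ[K] M) {s : Set α} {N : Submodule K M}
    (h : ∀ l ∈ s, f (single l 1) ∈ N) {c : α →₀ K} (hc : c ∈ supported K K s) : f c ∈ N := by
  rw [supported_eq_span_single] at hc
  induction hc using Submodule.span_induction with
  | mem x hx => obtain ⟨l, hl, rfl⟩ := hx; exact h l hl
  | zero => simp
  | add x y _ _ hx hy => rw [map_add]; exact N.add_mem hx hy
  | smul a x _ hx => rw [map_smul]; exact N.smul_mem a hx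

/-- Two linear maps which agree on a basis of the chains supported in `s` agree on them. -/
lemma map_eq_of_mem_supported {α M : Type*} [AddCommMonoid M] [Module K M]
    {f g : (α →₀ K) →ₗ[K] M} {s : Set α}
    (h : ∀ l ∈ s, f (single l 1) = g (single l 1)) {c : α →₀ K}
    (hc : c ∈ supported K K s) : f c = g c := by
  rw [supported_eq_span_single] at hc
  refine LinearMap.eqOn_span (fun x hx => ?_) hc
  obtain ⟨l, hl, rfl⟩ := hx
  exact h l hl

lemma map_map_eq_of_mem_supported {α M M' M'' : Type*} [AddCommMonoid M] [Module K M]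
    [AddCommMonoid M'] [Module K M'] [AddCommMonoid M''] [Module K M'']
    {f : (α →₀ K) →ₗ[K] M} {f' : M →ₗ[K] M''} {g : (α →₀ K) →ₗ[K] M'} {g' : M' →ₗ[K] M''}
    {s : Set α} (h : ∀ l ∈ s, f' (f (single l 1)) = g' (g (single l 1))) {c : α →₀ K}
    (hc : c ∈ supported K K s) : f' (f c) = g' (g c) :=
  map_eq_of_mem_supported (f := f' ∘ₗ f) (g := g' ∘ₗ g) h hc

lemma consMap_mem_supported {x : L} {s t : Set (List L)} (h : ∀ l ∈ s, x :: l ∈ t)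
    {c : List L →₀ K} (hc : c ∈ supported K K s) : consMap x c ∈ supported K K t :=
  map_mem_of_mem_supported _ (fun l hl => by
    rw [consMap_single]; exact single_mem_supported K _ (h l hl)) hc

lemma listBdry_single_mem (l : List L) (a : K) :
    listBdry (single l a) ∈ supported K K {l' | l'.Sublist l ∧ l'.length + 1 = l.length} := by
  induction l with
  | nil => simp
  | cons x l ih =>
    rw [listBdry_single_cons]
    refine Submodule.sub_mem _ (single_mem_supported K _ (by simp)) ?_
    refine consMap_mem_supported (fun l' hl' => ?_) ih
    exact ⟨hl'.1.cons_cons x, by simpa using hl'.2⟩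

lemma listBdry_mem_supported {s t : Set (List L)}
    (h : ∀ l ∈ s, ∀ l', l'.Sublist l → l'.length + 1 = l.length → l' ∈ t)
    {c : List L →₀ K} (hc : c ∈ supported K K s) : listBdry c ∈ supported K K t :=
  map_mem_of_mem_supported _ (fun l hl =>
    supported_mono (fun l' hl' => h l hl l' hl'.1 hl'.2) (listBdry_single_mem l 1)) hc

/-- Concatenation of lists, as a linear map on the tensor square. -/
def concatMap : (List L →₀ K) ⊗[K] (List L →₀ K) →ₗ[K] (List L →₀ K) :=
  TensorProduct.lift (Finsupp.linearCombination K fun l => Finsupp.lmapDomain K K (l ++ ·))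

@[simp]
lemma concatMap_single (l l' : List L) (a b : K) :
    concatMap (single l a ⊗ₜ[K] single l' b) = single (l ++ l') (a * b) := by
  simp [concatMap]

/-- The span of the pairs of lists satisfying `R`. -/
def pairSpan (R : List L → List L → Prop) : Submodule K ((List L →₀ K) ⊗[K] (List L →₀ K)) :=
  Submodule.span K {x | ∃ l l', R l l' ∧ x = single l 1 ⊗ₜ[K] single l' 1}

lemma tmul_mem_pairSpan {R : List L → List L → Prop} {l l' : List L} (h : R l l') :
    (single l 1 ⊗ₜ[K] single l' 1) ∈ pairSpan (K := K) R :=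
  Submodule.subset_span ⟨l, l', h, rfl⟩

lemma pairSpan_mono {R R' : List L → List L → Prop} (h : ∀ l l', R l l' → R' l l') :
    pairSpan (K := K) R ≤ pairSpan R' :=
  Submodule.span_mono fun _ ⟨l, l', hR, hx⟩ => ⟨l, l', h l l' hR, hx⟩

lemma map_mem_of_mem_pairSpan {M : Type*} [AddCommMonoid M] [Module K M]
    (f : (List L →₀ K) ⊗[K] (List L →₀ K) →ₗ[K] M) {R : List L → List L → Prop}
    {N : Submodule K M} (h : ∀ l l', R l l' → f (single l 1 ⊗ₜ[K] single l' 1) ∈ N)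
    {x : (List L →₀ K) ⊗[K] (List L →₀ K)} (hx : x ∈ pairSpan R) : f x ∈ N := by
  have : pairSpan R ≤ N.comap f :=
    Submodule.span_le.2 (by rintro _ ⟨l, l', hR, rfl⟩; exact h l l' hR)
  exact this hx

lemma rTensor_mem_pairSpan (f : (List L →₀ K) →ₗ[K] (List L →₀ K))
    {R R' : List L → List L → Prop}
    (h : ∀ l l', R l l' → f (single l 1) ∈ supported K K {k | R' k l'})
    {x : (List L →₀ K) ⊗[K] (List L →₀ K)} (hx : x ∈ pairSpan R) :
    f.rTensor (List L →₀ K) x ∈ pairSpan R' := by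
  refine map_mem_of_mem_pairSpan _ (fun l l' hR => ?_) hx
  rw [LinearMap.rTensor_tmul]
  exact map_mem_of_mem_supported
    ((TensorProduct.mk K (List L →₀ K) (List L →₀ K)).flip (single l' (1 : K)))
    (fun k hk => tmul_mem_pairSpan hk) (h l l' hR)

lemma lTensor_mem_pairSpan (f : (List L →₀ K) →ₗ[K] (List L →₀ K))
    {R R' : List L → List L → Prop}
    (h : ∀ l l', R l l' → f (single l' 1) ∈ supported K K {k | R' l k})
    {x : (List L →₀ K) ⊗[K] (List L →₀ K)} (hx : x ∈ pairSpan R) :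
    f.lTensor (List L →₀ K) x ∈ pairSpan R' := by
  refine map_mem_of_mem_pairSpan _ (fun l l' hR => ?_) hx
  rw [LinearMap.lTensor_tmul]
  exact map_mem_of_mem_supported (TensorProduct.mk K (List L →₀ K) (List L →₀ K) (single l (1 : K)))
    (fun k hk => tmul_mem_pairSpan hk) (h l l' hR)

lemma concatMap_mem_supported {R : List L → List L → Prop} {s : Set (List L)}
    (h : ∀ l l', R l l' → l ++ l' ∈ s) {x : (List L →₀ K) ⊗[K] (List L →₀ K)}
    (hx : x ∈ pairSpan R) : concatMap x ∈ supported K K s :=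
  map_mem_of_mem_pairSpan _ (fun l l' hR => by
    rw [concatMap_single]; exact single_mem_supported K _ (h l l' hR)) hx

lemma concatMap_rTensor_consMap (x : L) (y : (List L →₀ K) ⊗[K] (List L →₀ K)) :
    concatMap ((consMap x).rTensor _ y) = consMap x (concatMap y) := by
  have : concatMap ∘ₗ (consMap x).rTensor _ = consMap (K := K) x ∘ₗ concatMap := by
    ext l l'; simp
  exact LinearMap.congr_fun this y

/-- The Leibniz rule for concatenation. -/
lemma listBdry_concatMap {p : ℕ} {x : (List L →₀ K) ⊗[K] (List L →₀ K)}
    (hx : x ∈ pairSpan fun l _ => l.length = p) :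
    listBdry (concatMap x) = concatMap (listBdry.rTensor _ x) +
      (-1 : K) ^ p • concatMap (listBdry.lTensor _ x) := by
  have key : ∀ l l' : List L, listBdry (concatMap (single l (1 : K) ⊗ₜ[K] single l' (1 : K))) =
      concatMap (listBdry (single l 1) ⊗ₜ[K] single l' (1 : K)) +
      (-1 : K) ^ l.length • concatMap (single l (1 : K) ⊗ₜ[K] listBdry (single l' 1)) := by
    intro l l'
    induction l with
    | nil =>
      have : ∀ c : List L →₀ K, concatMap (single ([] : List L) (1 : K) ⊗ₜ[K] c) = c := by
        intro c
        induction c using Finsupp.induction_linear with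
        | zero => simp
        | add f g hf hg => rw [TensorProduct.tmul_add, map_add, hf, hg]
        | single k a => simp
      simp [this]
    | cons a l ih =>
      have h1 : ∀ c : List L →₀ K, concatMap (single (a :: l) (1 : K) ⊗ₜ[K] c) =
          consMap a (concatMap (single l (1 : K) ⊗ₜ[K] c)) := by
        intro c; rw [← concatMap_rTensor_consMap]; simp
      have h2 : ∀ c c' : List L →₀ K, concatMap (consMap a c ⊗ₜ[K] c') =
          consMap a (concatMap (c ⊗ₜ[K] c')) := by
        intro c c'; rw [← concatMap_rTensor_consMap]; simp
      rw [h1, listBdry_consMap, ih, listBdry_single_cons, TensorProduct.sub_tmul, map_sub, h2, h1]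
      simp only [map_add, map_smul, List.length_cons, pow_succ]
      module
  have := map_mem_of_mem_pairSpan (listBdry ∘ₗ concatMap - (concatMap ∘ₗ listBdry.rTensor _ +
      (-1 : K) ^ p • concatMap ∘ₗ listBdry.lTensor _)) (N := ⊥) (fun l l' hR => by
        subst hR; simp [-concatMap_single, key]) hx
  simpa [sub_eq_zero] using this

/-- The terms `(x₁, …, x_{p+1}) ⊗ (x_{p+1}, …, x_i)` of the Alexander–Whitney diagonal. -/
def splitList : ℕ → List L → (List L →₀ K) ⊗[K] (List L →₀ K)
  | _, [] => 0
  | 0, x :: l => single [x] 1 ⊗ₜ[K] single (x :: l) 1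
  | p + 1, x :: l => (consMap x).rTensor _ (splitList p l)

/-- The linear extension of `splitList`. -/
def splitMap (p : ℕ) : (List L →₀ K) →ₗ[K] (List L →₀ K) ⊗[K] (List L →₀ K) :=
  Finsupp.linearCombination K (splitList p)

lemma splitMap_succ_consMap (p : ℕ) (x : L) (c : List L →₀ K) :
    splitMap (p + 1) (consMap x c) = (consMap x).rTensor _ (splitMap p c) := by
  have : splitMap (p + 1) ∘ₗ consMap x = (consMap x).rTensor _ ∘ₗ splitMap (K := K) p := by
    ext l; simp [splitMap, splitList]
  exact LinearMap.congr_fun this c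

lemma splitMap_zero_consMap (x : L) (c : List L →₀ K) :
    splitMap 0 (consMap x c) = single [x] (1 : K) ⊗ₜ[K] consMap x c := by
  have : splitMap 0 ∘ₗ consMap x =
      TensorProduct.mk K _ _ (single [x] (1 : K)) ∘ₗ consMap (K := K) x := by
    ext l; simp [splitMap, splitList]
  exact LinearMap.congr_fun this c

lemma splitMap_single_mem (p : ℕ) (l : List L) :
    splitMap p (single l (1 : K)) ∈ pairSpan fun l₁ l₂ => l₁.Sublist l ∧ l₂.Sublist l ∧
      l₁.length = p + 1 ∧ l₂.length + p = l.length := by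
  induction p generalizing l with
  | zero =>
    cases l with
    | nil => simp [splitMap, splitList]
    | cons x l =>
      simp only [splitMap, linearCombination_single, splitList, one_smul]
      exact tmul_mem_pairSpan (by simp)
  | succ p ih =>
    cases l with
    | nil => simp [splitMap, splitList]
    | cons x l =>
      rw [← consMap_single, splitMap_succ_consMap]
      refine rTensor_mem_pairSpan _ (fun l₁ l₂ h => ?_) (ih l)
      rw [consMap_single]
      refine single_mem_supported K _ ⟨h.1.cons_cons x, h.2.1.cons x, ?_, ?_⟩
      · simpa using h.2.2.1
      · simpa [← add_assoc] using h.2.2.2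

lemma splitMap_mem_pairSpan {p : ℕ} {s : Set (List L)} {R : List L → List L → Prop}
    (h : ∀ l ∈ s, ∀ l₁ l₂, l₁.Sublist l → l₂.Sublist l → l₁.length = p + 1 →
      l₂.length + p = l.length → R l₁ l₂) {c : List L →₀ K} (hc : c ∈ supported K K s) :
    splitMap p c ∈ pairSpan R := by
  refine map_mem_of_mem_supported (splitMap p) (fun l hl => ?_) hc
  exact pairSpan_mono (fun l₁ l₂ h' => h l hl l₁ l₂ h'.1 h'.2.1 h'.2.2.1 h'.2.2.2)
    (splitMap_single_mem p l)

lemma rTensor_listBdry_consMap (x : L) (y : (List L →₀ K) ⊗[K] (List L →₀ K)) :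
    listBdry.rTensor _ ((consMap x).rTensor _ y) =
      y - (consMap x).rTensor _ (listBdry.rTensor _ y) := by
  induction y using TensorProduct.induction_on with
  | zero => simp
  | tmul c c' => simp [listBdry_consMap, TensorProduct.sub_tmul]
  | add y y' h h' => simp only [map_add, h, h']; abel

lemma lTensor_rTensor_comm (f g : (List L →₀ K) →ₗ[K] (List L →₀ K))
    (y : (List L →₀ K) ⊗[K] (List L →₀ K)) :
    g.lTensor _ (f.rTensor _ y) = f.rTensor _ (g.lTensor _ y) := by
  rw [← LinearMap.comp_apply, ← LinearMap.comp_apply, LinearMap.lTensor_comp_rTensor,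
    LinearMap.rTensor_comp_lTensor]

lemma rTensor_listBdry_splitMap_succ (p : ℕ) {c : List L →₀ K}
    (hc : c ∈ supported K K {l : List L | p + 2 ≤ l.length}) :
    listBdry.rTensor _ (splitMap (p + 1) c) =
      splitMap p (listBdry c) + (-1 : K) ^ (p + 1) • listBdry.lTensor _ (splitMap p c) := by
  have key : ∀ l : List L, p + 2 ≤ l.length →
      listBdry.rTensor _ (splitMap (p + 1) (single l (1 : K))) =
      splitMap p (listBdry (single l (1 : K))) +
        (-1 : K) ^ (p + 1) • listBdry.lTensor _ (splitMap p (single l (1 : K))) := by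
    clear hc
    intro l hl
    induction p generalizing l with
    | zero =>
      obtain _ | ⟨x, _ | ⟨y, l⟩⟩ := l
      · simp at hl
      · simp at hl
      · have h1 : splitMap 0 (single (y :: l) (1 : K)) =
            single [y] (1 : K) ⊗ₜ[K] single (y :: l) (1 : K) := by simp [splitMap, splitList]
        rw [← consMap_single x, splitMap_succ_consMap, rTensor_listBdry_consMap, listBdry_consMap,
          map_sub, splitMap_zero_consMap, splitMap_zero_consMap, h1, LinearMap.lTensor_tmul,
          listBdry_consMap, LinearMap.rTensor_tmul, listBdry_single_cons, LinearMap.rTensor_tmul]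
        simp only [listBdry_single_nil, map_zero, sub_zero, consMap_single, TensorProduct.tmul_sub]
        module
    | succ p ih =>
      obtain _ | ⟨x, l⟩ := l
      · simp at hl
      · have ih' := ih l (by simpa using hl)
        rw [← consMap_single x, splitMap_succ_consMap, rTensor_listBdry_consMap, listBdry_consMap,
          map_sub, splitMap_succ_consMap, splitMap_succ_consMap, ih', lTensor_rTensor_comm]
        simp only [map_add, map_smul]
        module
  have := map_eq_of_mem_supported (f := listBdry.rTensor (List L →₀ K) ∘ₗ splitMap (p + 1))
    (g := splitMap p ∘ₗ listBdry +
      (-1 : K) ^ (p + 1) • listBdry.lTensor (List L →₀ K) ∘ₗ splitMap p)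
    (fun l hl => by simpa using key l hl) hc
  simpa using this

lemma concatMap_rTensor_listBdry_splitMap_zero {c : List L →₀ K}
    (hc : c ∈ supported K K {l : List L | 1 ≤ l.length}) :
    concatMap (listBdry.rTensor _ (splitMap 0 c)) = c := by
  refine map_eq_of_mem_supported (f := concatMap ∘ₗ listBdry.rTensor (List L →₀ K) ∘ₗ splitMap 0)
    (g := LinearMap.id) (fun l hl => ?_) hc
  obtain _ | ⟨x, l⟩ := l
  · simp at hl
  · simp [splitMap, splitList, listBdry_single_cons]

open scoped Classical in
/-- The cone operator with apex `n`: prepend `n` to the lists which do not start with `n`. -/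
def coneMap (n : L) : (List L →₀ K) →ₗ[K] (List L →₀ K) :=
  Finsupp.linearCombination K fun l => if l.head? = some n then 0 else single (n :: l) 1

lemma coneMap_consMap_self (n : L) (c : List L →₀ K) : coneMap n (consMap n c) = 0 := by
  have : coneMap n ∘ₗ consMap n = (0 : (List L →₀ K) →ₗ[K] (List L →₀ K)) := by
    ext l; simp [coneMap]
  exact LinearMap.congr_fun this c

lemma coneMap_eq_consMap {n : L} {c : List L →₀ K} (hc : c ∈ supported K K {l | n ∉ l}) :
    coneMap n c = consMap n c := by
  refine map_eq_of_mem_supported (fun l hl => ?_) hc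
  have : l.head? ≠ some n := fun h => hl (List.mem_of_mem_head? h)
  simp [coneMap, this]

open scoped Classical in
/-- Remove the first entry of the lists starting with `m`, and kill the other lists. -/
def tailMap (m : L) : (List L →₀ K) →ₗ[K] (List L →₀ K) :=
  Finsupp.linearCombination K fun l => if l.head? = some m then single l.tail 1 else 0

lemma tailMap_consMap (m : L) (c : List L →₀ K) : tailMap m (consMap m c) = c := by
  have : tailMap m ∘ₗ consMap m = (LinearMap.id : (List L →₀ K) →ₗ[K] (List L →₀ K)) := by
    ext l; simp [tailMap]
  exact LinearMap.congr_fun this c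

lemma tailMap_eq_zero {m : L} {c : List L →₀ K} (hc : c ∈ supported K K {l | m ∉ l}) :
    tailMap m c = 0 := by
  refine map_eq_of_mem_supported (g := 0) (fun l hl => ?_) hc
  have : l.head? ≠ some m := fun h => hl (List.mem_of_mem_head? h)
  simp [tailMap, this]

end ListComplex

section Retraction

variable {K} {L : Type}

lemma listBdry_coneMap [PartialOrder L] {n : L} {c : List L →₀ K}
    (hc : c ∈ supported K K {l | l.Pairwise (· > ·) ∧ ∀ x ∈ l, x ≤ n}) :
    listBdry (coneMap n c) + coneMap n (listBdry c) = c := by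
  refine map_eq_of_mem_supported (f := listBdry ∘ₗ coneMap n + coneMap n ∘ₗ listBdry)
    (g := LinearMap.id) (fun l hl => ?_) hc
  simp only [LinearMap.add_apply, LinearMap.comp_apply, LinearMap.id_apply]
  by_cases hn : n ∈ l
  · obtain _ | ⟨x, l⟩ := l
    · simp at hn
    · have hx : x = n := by
        rcases List.mem_cons.1 hn with h | h
        · exact h.symm
        · exact absurd (hl.2 x (by simp)) (List.rel_of_pairwise_cons hl.1 h).not_ge
      subst hx
      have hxl : x ∉ l := fun h => lt_irrefl x (List.rel_of_pairwise_cons hl.1 h)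
      rw [← consMap_single, coneMap_consMap_self, listBdry_consMap, map_sub, coneMap_consMap_self,
        coneMap_eq_consMap (single_mem_supported K _ hxl)]
      simp
  · rw [coneMap_eq_consMap (single_mem_supported K _ hn), listBdry_consMap, coneMap_eq_consMap]
    · simp
    · exact listBdry_mem_supported (s := {l}) (fun l' h k hk _ hnk => hn (h ▸ hk.subset hnk))
        (single_mem_supported K _ rfl)

variable [Lattice L] [OrderBot L]

/-- The join of the entries of a list. -/
def listSup (l : List L) : L := l.foldr (· ⊔ ·) ⊥

lemma listSup_le_iff {l : List L} {a : L} : listSup l ≤ a ↔ ∀ x ∈ l, x ≤ a := by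
  induction l with
  | nil => simp [listSup]
  | cons x l ih => simpa [listSup] using fun _ => ih

lemma le_listSup {l : List L} {x : L} (h : x ∈ l) : x ≤ listSup l :=
  listSup_le_iff.1 le_rfl x h

lemma listSup_mono {l l' : List L} (h : l ⊆ l') : listSup l ≤ listSup l' :=
  listSup_le_iff.2 fun _ hx => le_listSup (h hx)

/-- The lists with entries in `(⊥, m]`. -/
def goodLists (m : L) : Set (List L) := {l | ∀ x ∈ l, ⊥ < x ∧ x ≤ m}

/-- The strictly decreasing lists with entries in `(⊥, m]`. -/
def chainLists (m : L) : Set (List L) := {l | l.Pairwise (· > ·) ∧ l ∈ goodLists m}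

/-- The strictly decreasing lists with entries in `(⊥, n)`. -/
def openChains (n : L) : Set (List L) := {l | l.Pairwise (· > ·) ∧ ∀ x ∈ l, ⊥ < x ∧ x < n}

/-- The lists with entries in `(⊥, m]` whose join is not `m`. -/
def lowLists (m : L) : Set (List L) := {l | l ∈ goodLists m ∧ ¬ m ≤ listSup l}

lemma goodLists_of_subset {m : L} {l l' : List L} (h : l ∈ goodLists m) (h' : l' ⊆ l) :
    l' ∈ goodLists m := fun x hx => h x (h' hx)

lemma chainLists_of_sublist {m : L} {l l' : List L} (h : l ∈ chainLists m) (hsub : l'.Sublist l) :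
    l' ∈ chainLists m := ⟨h.1.sublist hsub, goodLists_of_subset h.2 hsub.subset⟩

/-- The chains which are boundaries modulo the lists whose join is not `m`. -/
def relBoundaries (K : Type) [Field K] (m : L) : Submodule K (List L →₀ K) :=
  (supported K K (goodLists m)).map listBdry ⊔ supported K K (lowLists m)

lemma listBdry_mem_relBoundaries {m : L} {c : List L →₀ K} (h : c ∈ supported K K (goodLists m)) :
    listBdry c ∈ relBoundaries K m :=
  Submodule.mem_sup_left (Submodule.mem_map_of_mem h)

lemma mem_relBoundaries_of_low {m : L} {c : List L →₀ K} (h : c ∈ supported K K (lowLists m)) :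
    c ∈ relBoundaries K m :=
  Submodule.mem_sup_right h

/-- Auxiliary recursion for `retractMap`; the first argument is the length of the list. -/
def retractAux : ℕ → List L → (List L →₀ K)
  | 0, l => single l 1
  | n + 1, l => coneMap (listSup l)
      (Finsupp.linearCombination K (retractAux n) (listBdry (single l 1)))

/-- The chain map from lists to strictly decreasing lists built by coning over joins. -/
def retractMap : (List L →₀ K) →ₗ[K] (List L →₀ K) :=
  Finsupp.linearCombination K fun l => retractAux l.length l

lemma retractMap_single_nil : retractMap (single ([] : List L) (1 : K)) = single [] 1 := by
  simp [retractMap, retractAux]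

lemma retractMap_single_cons (x : L) (l : List L) :
    retractMap (single (x :: l) (1 : K)) =
      coneMap (listSup (x :: l)) (retractMap (listBdry (single (x :: l) 1))) := by
  simp only [retractMap, linearCombination_single, one_smul, List.length_cons, retractAux]
  congr 1
  refine map_eq_of_mem_supported (fun l' hl' => ?_) (listBdry_single_mem (x :: l) 1)
  have : l'.length = l.length := by simpa using hl'.2
  simp [this]

lemma retractMap_single_mem {m : L} {l : List L} (hl : l ∈ goodLists m) :
    retractMap (single l (1 : K)) ∈
      supported K K {k | k ∈ chainLists m ∧ listSup k ≤ listSup l} := by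
  induction h : l.length generalizing l with
  | zero =>
    obtain rfl := List.length_eq_zero_iff.1 h
    rw [retractMap_single_nil]
    exact single_mem_supported K _ ⟨⟨List.Pairwise.nil, hl⟩, le_rfl⟩
  | succ n ih =>
    obtain _ | ⟨x, l⟩ := l
    · simp at h
    rw [retractMap_single_cons]
    have h1 : retractMap (listBdry (single (x :: l) (1 : K))) ∈
        supported K K {k | k ∈ chainLists m ∧ listSup k ≤ listSup (x :: l)} := by
      refine map_mem_of_mem_supported _ (fun l' hl' => ?_) (listBdry_single_mem (x :: l) 1)
      refine supported_mono (fun k hk => ?_)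
        (ih (goodLists_of_subset hl hl'.1.subset) (by have := hl'.2; omega))
      exact ⟨hk.1, hk.2.trans (listSup_mono hl'.1.subset)⟩
    refine map_mem_of_mem_supported _ (fun k hk => ?_) h1
    by_cases hh : k.head? = some (listSup (x :: l))
    · simp [coneMap, hh]
    · have hlt : ∀ y ∈ k, y < listSup (x :: l) := by
        obtain _ | ⟨a, k⟩ := k
        · simp
        · have ha : a < listSup (x :: l) :=
            lt_of_le_of_ne ((le_listSup (by simp)).trans hk.2) (by simpa using hh)
          intro y hy
          rcases List.mem_cons.1 hy with rfl | hy
          · exact ha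
          · exact (List.rel_of_pairwise_cons hk.1.1 hy).trans ha
      simp only [coneMap, linearCombination_single, hh, if_false, one_smul]
      refine single_mem_supported K _ ⟨⟨List.pairwise_cons.2 ⟨hlt, hk.1.1⟩, ?_⟩, ?_⟩
      · intro y hy
        rcases List.mem_cons.1 hy with rfl | hy
        · exact ⟨(hl x (by simp)).1.trans_le (le_listSup (by simp)),
            listSup_le_iff.2 fun z hz => (hl z hz).2⟩
        · exact hk.1.2 y hy
      · refine listSup_le_iff.2 fun y hy => ?_
        rcases List.mem_cons.1 hy with rfl | hy
        · exact le_rfl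
        · exact (hlt y hy).le

lemma retractMap_mem {m : L} {s : Set (List L)} {a : L} {c : List L →₀ K}
    (hs : ∀ l ∈ s, l ∈ goodLists m ∧ listSup l ≤ a) (hc : c ∈ supported K K s) :
    retractMap c ∈ supported K K {k | k ∈ chainLists m ∧ listSup k ≤ a} :=
  map_mem_of_mem_supported _ (fun l hl => supported_mono
    (fun _ hk => And.intro hk.1 (hk.2.trans (hs l hl).2)) (retractMap_single_mem (hs l hl).1)) hc

lemma listBdry_retractMap_single {m : L} {l : List L} (hl : l ∈ goodLists m) :
    listBdry (retractMap (single l (1 : K))) = retractMap (listBdry (single l 1)) := by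
  induction h : l.length generalizing l with
  | zero =>
    obtain rfl := List.length_eq_zero_iff.1 h
    simp [retractMap_single_nil]
  | succ n ih =>
    obtain _ | ⟨x, l⟩ := l
    · simp at h
    have h1 : listBdry (retractMap (listBdry (single (x :: l) (1 : K)))) =
        retractMap (listBdry (listBdry (single (x :: l) (1 : K)))) := by
      refine map_map_eq_of_mem_supported (fun k hk => ?_) (listBdry_single_mem (x :: l) 1)
      exact ih (goodLists_of_subset hl hk.1.subset) (by have := hk.2; omega)
    have h2 := retractMap_mem (m := m) (a := listSup (x :: l)) (fun k hk =>
      ⟨goodLists_of_subset hl hk.1.subset, listSup_mono hk.1.subset⟩)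
      (listBdry_single_mem (x :: l) (1 : K))
    have h3 := listBdry_coneMap (supported_mono
      (fun k hk => And.intro hk.1.1 (listSup_le_iff.1 hk.2)) h2)
    rwa [h1, listBdry_listBdry, map_zero, map_zero, add_zero, ← retractMap_single_cons] at h3

lemma listBdry_retractMap {m : L} {c : List L →₀ K} (hc : c ∈ supported K K (goodLists m)) :
    listBdry (retractMap c) = retractMap (listBdry c) := by
  exact map_map_eq_of_mem_supported (fun l hl => listBdry_retractMap_single hl) hc

lemma retractMap_of_chain {m : L} {c : List L →₀ K} (hc : c ∈ supported K K (chainLists m)) :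
    retractMap c = c := by
  have key : ∀ n : ℕ, ∀ l ∈ chainLists m, l.length = n →
      retractMap (single l (1 : K)) = single l 1 := by
    intro n
    induction n with
    | zero =>
      intro l _ h
      obtain rfl := List.length_eq_zero_iff.1 h
      exact retractMap_single_nil
    | succ n ih =>
      intro l hl h
      obtain _ | ⟨x, l⟩ := l
      · simp at h
      have h0 : retractMap (listBdry (single (x :: l) (1 : K))) = listBdry (single (x :: l) 1) := by
        refine map_eq_of_mem_supported (g := LinearMap.id) (fun l' hl' => ?_)
          (listBdry_single_mem (x :: l) 1)
        exact ih l' (chainLists_of_sublist hl hl'.1) (by have := hl'.2; omega)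
      have hle : ∀ y ∈ x :: l, y ≤ x := fun y hy => by
        rcases List.mem_cons.1 hy with rfl | hy
        · exact le_rfl
        · exact (List.rel_of_pairwise_cons hl.1 hy).le
      have hx : listSup (x :: l) = x := le_antisymm (listSup_le_iff.2 hle) (le_listSup (by simp))
      have h1 := listBdry_coneMap (n := x) (single_mem_supported K (1 : K)
        (show x :: l ∈ {l | l.Pairwise (· > ·) ∧ ∀ y ∈ l, y ≤ x} from ⟨hl.1, hle⟩))
      have h2 : coneMap x (single (x :: l) (1 : K)) = 0 := by
        rw [← consMap_single, coneMap_consMap_self]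
      rw [retractMap_single_cons, h0, hx]
      rwa [h2, map_zero, zero_add] at h1
  exact map_eq_of_mem_supported (g := LinearMap.id) (fun l hl => key _ l hl rfl) hc

lemma mem_openChains_of_cons {m x : L} {l : List L} (h : x :: l ∈ chainLists m) :
    l ∈ openChains x :=
  ⟨h.1.of_cons, fun y hy => ⟨(h.2 y (by simp [hy])).1, List.rel_of_pairwise_cons h.1 hy⟩⟩

lemma cons_mem_chainLists {m x : L} {l : List L} (h : l ∈ openChains x) (hx : ⊥ < x)
    (hm : x ≤ m) : x :: l ∈ chainLists m := by
  refine ⟨List.pairwise_cons.2 ⟨fun y hy => (h.2 y hy).2, h.1⟩, fun y hy => ?_⟩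
  rcases List.mem_cons.1 hy with rfl | hy
  · exact ⟨hx, hm⟩
  · exact ⟨(h.2 y hy).1, (h.2 y hy).2.le.trans hm⟩

lemma tailMap_mem {m : L} {c : List L →₀ K} (hc : c ∈ supported K K (chainLists m)) :
    tailMap m c ∈ supported K K (openChains m) := by
  refine map_mem_of_mem_supported _ (fun l hl => ?_) hc
  obtain _ | ⟨x, l⟩ := l
  · simp [tailMap]
  · by_cases hx : x = m
    · subst hx
      simpa [tailMap] using single_mem_supported K (1 : K) (mem_openChains_of_cons hl)
    · simp [tailMap, hx]

lemma tailMap_listBdry {m : L} {c : List L →₀ K} (hc : c ∈ supported K K (chainLists m)) :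
    tailMap m (listBdry c) = - listBdry (tailMap m c) := by
  refine map_eq_of_mem_supported (f := tailMap m ∘ₗ listBdry)
    (g := - (listBdry (K := K) ∘ₗ tailMap m))
    (fun l hl => ?_) hc
  simp only [LinearMap.comp_apply, LinearMap.neg_apply]
  by_cases hm : m ∈ l
  · obtain _ | ⟨x, l⟩ := l
    · simp at hm
    · have hx : x = m := by
        rcases List.mem_cons.1 hm with h | h
        · exact h.symm
        · exact absurd (hl.2 x (by simp)).2 (List.rel_of_pairwise_cons hl.1 h).not_ge
      subst hx
      have hxl : x ∉ l := fun h => lt_irrefl x (List.rel_of_pairwise_cons hl.1 h)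
      rw [← consMap_single, listBdry_consMap, map_sub, tailMap_consMap, tailMap_consMap,
        tailMap_eq_zero (single_mem_supported K _ hxl), zero_sub]
  · rw [tailMap_eq_zero (single_mem_supported K _ hm), tailMap_eq_zero, map_zero, neg_zero]
    exact listBdry_mem_supported (s := {l}) (fun l' h k hk _ hmk => hm (h ▸ hk.subset hmk))
        (single_mem_supported K _ rfl)

/-- A relative boundary of the form `m :: z` comes from a boundary `z` in the open interval
`(⊥, m)`. -/
lemma exists_listBdry_eq_of_mem_relBoundaries {m : L} {z : List L →₀ K}
    (hz : consMap m z ∈ supported K K (chainLists m)) (h : consMap m z ∈ relBoundaries K m) :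
    ∃ y ∈ supported K K (openChains m), listBdry y = z := by
  obtain ⟨_, ⟨y, hy, rfl⟩, j, hj, hyj⟩ := Submodule.mem_sup.1 h
  have hry : retractMap y ∈ supported K K (chainLists m) :=
    map_mem_of_mem_supported _ (fun l hl => supported_mono (fun k hk => hk.1)
      (retractMap_single_mem hl)) hy
  have hrj : retractMap j ∈ supported K K {l : List L | m ∉ l} :=
    map_mem_of_mem_supported _ (fun l hl => supported_mono
      (fun k hk hm => hl.2 ((le_listSup hm).trans hk.2)) (retractMap_single_mem hl.1)) hj
  refine ⟨- tailMap m (retractMap y), Submodule.neg_mem _ (tailMap_mem hry), ?_⟩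
  have h1 := congrArg (fun c => tailMap m (retractMap c)) hyj
  simp only [map_add, retractMap_of_chain hz, tailMap_consMap, tailMap_eq_zero hrj, add_zero] at h1
  rw [← listBdry_retractMap hy, tailMap_listBdry hry] at h1
  rw [map_neg, h1]

end Retraction

section Translation

variable {K} {L : Type}

lemma listBdry_single_ofFn {n : ℕ} (c : Fin (n + 1) → L) :
    listBdry (single (List.ofFn c) (1 : K)) =
      ∑ k : Fin (n + 1), (-1 : K) ^ (k : ℕ) • single (List.ofFn (c ∘ k.succAbove)) 1 := by
  induction n with
  | zero => simp [listBdry_single_cons]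
  | succ n ih =>
    rw [List.ofFn_succ, listBdry_single_cons, ih (fun i => c i.succ),
      Fin.sum_univ_succ (n := n + 1), sub_eq_add_neg, map_sum, ← Finset.sum_neg_distrib]
    congr 1
    · simp [Function.comp_def]
    · refine Finset.sum_congr rfl fun k _ => ?_
      rw [List.ofFn_succ (f := c ∘ k.succ.succAbove)]
      simp [Function.comp_def, pow_succ]

variable [Lattice L] [OrderBot L]

/-- The list of the entries of an order chain of an open interval. -/
def chainList {n : L} {k : ℕ} (c : OChain (Set.Ioo (⊥ : L) n) k) : List L :=
  List.ofFn fun i => (c.1 i : L)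

lemma chainList_mem {n : L} {k : ℕ} (c : OChain (Set.Ioo (⊥ : L) n) k) :
    chainList c ∈ openChains n ∩ {l | l.length = k} := by
  refine ⟨⟨List.pairwise_ofFn.2 fun i j hij => c.2 hij, fun x hx => ?_⟩, by simp [chainList]⟩
  obtain ⟨i, rfl⟩ := List.mem_ofFn.1 hx
  exact (c.1 i).2

lemma exists_chainList_eq {n : L} {k : ℕ} {l : List L}
    (hl : l ∈ openChains n ∩ {l | l.length = k}) :
    ∃ c : OChain (Set.Ioo (⊥ : L) n) k, chainList c = l := by
  obtain ⟨hl, rfl⟩ := hl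
  exact ⟨⟨fun i => ⟨l.get i, hl.2 _ (l.get_mem i)⟩,
    fun i j hij => List.pairwise_iff_get.1 hl.1 i j hij⟩, List.ofFn_get l⟩

lemma chainList_injective {n : L} {k : ℕ} :
    Function.Injective (chainList (n := n) (k := k)) := fun c c' h => by
  have := List.ofFn_injective h
  exact Subtype.ext (funext fun i => Subtype.ext (congrFun this i))

/-- The linear extension of `chainList`. -/
def chainListMap (n : L) (k : ℕ) : CGrp K (Set.Ioo (⊥ : L) n) k →ₗ[K] (List L →₀ K) :=
  Finsupp.lmapDomain K K chainList

lemma chainListMap_injective (n : L) (k : ℕ) :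
    Function.Injective (chainListMap (K := K) n k) :=
  Finsupp.mapDomain_injective chainList_injective

lemma listBdry_chainListMap (n : L) (k : ℕ) (c : CGrp K (Set.Ioo (⊥ : L) n) (k + 1)) :
    listBdry (chainListMap n (k + 1) c) = chainListMap n k (cbdry K _ k c) := by
  have : listBdry ∘ₗ chainListMap n (k + 1) = chainListMap n k ∘ₗ cbdry K _ k := by
    ext1 c
    ext1
    simp only [LinearMap.comp_apply, chainListMap, lsingle_apply, lmapDomain_apply,
      mapDomain_single, cbdry, lsum_single, LinearMap.sum_apply, LinearMap.smul_apply,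
      mapDomain_finsetSum, mapDomain_smul]
    exact listBdry_single_ofFn _
  exact LinearMap.congr_fun this c

lemma chainListMap_mem (n : L) (k : ℕ) (c : CGrp K (Set.Ioo (⊥ : L) n) k) :
    chainListMap n k c ∈ supported K K (openChains n ∩ {l | l.length = k}) := by
  refine map_mem_of_mem_supported _ (s := Set.univ) (fun c _ => ?_) (by simp)
  simpa [chainListMap] using single_mem_supported K (1 : K) (chainList_mem c)

lemma exists_chainListMap_eq {n : L} {k : ℕ} {z : List L →₀ K}
    (hz : z ∈ supported K K (openChains n ∩ {l | l.length = k})) :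
    ∃ c, chainListMap n k c = z := by
  refine map_mem_of_mem_supported LinearMap.id (N := LinearMap.range (chainListMap n k))
    (fun l hl => ?_) hz
  obtain ⟨c, rfl⟩ := exists_chainList_eq hl
  exact ⟨single c 1, by simp [chainListMap]⟩

lemma listBdry_eq_zero_of_length_zero {n : L} {z : List L →₀ K}
    (hz : z ∈ supported K K (openChains n ∩ {l | l.length = 0})) : listBdry z = 0 := by
  refine map_eq_of_mem_supported (g := 0) (fun l hl => ?_) hz
  obtain rfl := List.length_eq_zero_iff.1 hl.2
  simp

/-- Vanishing of the reduced homology of an open interval, in terms of lists. -/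
lemma exists_listBdry_eq_of_not_rHomNontrivial {n : L} {k : ℕ}
    (h : ¬ RHomNontrivial K (Set.Ioo (⊥ : L) n) k) {z : List L →₀ K}
    (hz : z ∈ supported K K (openChains n ∩ {l | l.length = k})) (hz' : listBdry z = 0) :
    ∃ y ∈ supported K K (openChains n ∩ {l | l.length = k + 1}), listBdry y = z := by
  obtain ⟨c, rfl⟩ := exists_chainListMap_eq hz
  have hc : c ∈ cyclesAt K (Set.Ioo (⊥ : L) n) k := by
    cases k with
    | zero => exact Submodule.mem_top
    | succ k =>
      rw [listBdry_chainListMap] at hz'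
      exact LinearMap.mem_ker.2 (chainListMap_injective n k (by rw [hz', map_zero]))
  obtain ⟨y, rfl⟩ := not_not.1 h hc
  exact ⟨chainListMap n (k + 1) y, chainListMap_mem n (k + 1) y, listBdry_chainListMap n k y⟩

/-- Nonvanishing of the reduced homology of an open interval, in terms of lists. -/
lemma exists_cycle_of_rHomNontrivial {n : L} {k : ℕ}
    (h : RHomNontrivial K (Set.Ioo (⊥ : L) n) k) :
    ∃ z ∈ supported K K (openChains n ∩ {l | l.length = k}), listBdry z = 0 ∧
      ∀ y ∈ supported K K (openChains n), listBdry y ≠ z := by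
  obtain ⟨c, hc, hc'⟩ := SetLike.not_le_iff_exists.1 h
  refine ⟨chainListMap n k c, chainListMap_mem n k c, ?_, fun y hy hyc => hc' ?_⟩
  · cases k with
    | zero => exact listBdry_eq_zero_of_length_zero (chainListMap_mem n 0 c)
    | succ k => rw [listBdry_chainListMap, LinearMap.mem_ker.1 hc, map_zero]
  · classical
    have hsum := Finsupp.filter_add_filter_not y fun l => l.length = k + 1
    have h1 : y.filter (fun l => l.length = k + 1) ∈
        supported K K (openChains n ∩ {l | l.length = k + 1}) := fun l hl => by
      rw [Finset.mem_coe, Finsupp.support_filter, Finset.mem_filter] at hl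
      exact ⟨hy hl.1, hl.2⟩
    have h2 : y.filter (fun l => ¬ l.length = k + 1) ∈
        supported K K {l | l.length ≠ k + 1} := fun l hl => by
      rw [Finset.mem_coe, Finsupp.support_filter, Finset.mem_filter] at hl
      exact hl.2
    generalize y.filter (fun l => l.length = k + 1) = y₁ at *
    generalize y.filter (fun l => ¬ l.length = k + 1) = y₂ at *
    subst hsum
    have h3 : listBdry y₂ ∈ supported K K {l : List L | l.length ≠ k} :=
      listBdry_mem_supported (s := {l : List L | l.length ≠ k + 1})
        (t := {l : List L | l.length ≠ k}) (fun l hl l' _ hl' => by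
          simp only [Set.mem_ofPred_eq, ne_eq] at hl ⊢; omega) h2
    have h4 : listBdry y₂ ∈ supported K K {l : List L | l.length = k} := by
      rw [map_add, add_comm] at hyc
      rw [eq_sub_of_add_eq hyc]
      exact Submodule.sub_mem _ (supported_mono Set.inter_subset_right (chainListMap_mem n k c))
        (listBdry_mem_supported (fun l hl l' _ hl' => by
          have := hl.2; simp only [Set.mem_ofPred_eq] at this ⊢; omega) h1)
    have hdis : Disjoint {l : List L | l.length = k} {l : List L | l.length ≠ k} :=
      Set.disjoint_left.2 fun l h h' => h' h
    have h5 : listBdry y₂ = 0 :=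
      Submodule.disjoint_def.1 (disjoint_supported_supported hdis) _ h4 h3
    rw [map_add, h5, add_zero] at hyc
    obtain ⟨b, rfl⟩ := exists_chainListMap_eq h1
    rw [listBdry_chainListMap] at hyc
    exact ⟨b, chainListMap_injective n k hyc⟩

end Translation

section Homotopy

variable {K}

/-- A linear map admits a generalized inverse on a subspace. -/
lemma exists_generalized_inverse {V W : Type*} [AddCommGroup V] [Module K V] [AddCommGroup W]
    [Module K W] (f : V →ₗ[K] W) (S : Submodule K V) :
    ∃ g : W →ₗ[K] V, (∀ w, g w ∈ S) ∧ ∀ x ∈ S, f (g (f x)) = f x := by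
  obtain ⟨g, hg⟩ := (f.domRestrict S).rangeRestrict.exists_rightInverse_of_surjective
    (LinearMap.range_rangeRestrict _)
  obtain ⟨g', hg'⟩ := LinearMap.exists_extend g
  refine ⟨S.subtype ∘ₗ g', fun w => (g' w).2, fun x hx => ?_⟩
  have h1 := LinearMap.congr_fun hg ⟨f x, ⟨x, hx⟩, rfl⟩
  have h2 := LinearMap.congr_fun hg' ⟨f x, ⟨x, hx⟩, rfl⟩
  simp only [LinearMap.comp_apply, Submodule.subtype_apply] at h2 ⊢
  rw [h2]
  exact congrArg Subtype.val h1

variable {L : Type} [Lattice L] [OrderBot L]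

/-- A partial contracting homotopy of the chains of `(⊥, n)`, in a degree where the reduced
homology vanishes. -/
lemma exists_homotopy (n : L) (k : ℕ) :
    ∃ u v : (List L →₀ K) →ₗ[K] (List L →₀ K),
      (∀ c, u c ∈ supported K K (openChains n ∩ {l | l.length = k + 1})) ∧
      (∀ c, v c ∈ supported K K (openChains n ∩ {l | l.length = k})) ∧
      (¬ RHomNontrivial K (Set.Ioo (⊥ : L) n) k →
        ∀ c ∈ supported K K (openChains n ∩ {l | l.length = k}),
          listBdry (u c) + v (listBdry c) = c) := by
  obtain ⟨v, hv, hv'⟩ := exists_generalized_inverse (listBdry (K := K))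
    (supported K K (openChains n ∩ {l | l.length = k}))
  obtain ⟨g, hg, hg'⟩ := exists_generalized_inverse (listBdry (K := K))
    (supported K K (openChains n ∩ {l | l.length = k + 1}))
  refine ⟨g ∘ₗ (LinearMap.id - v ∘ₗ listBdry), v, fun c => hg _, hv, fun h c hc => ?_⟩
  obtain ⟨y, hy, hyc⟩ := exists_listBdry_eq_of_not_rHomNontrivial h
    (Submodule.sub_mem _ hc (hv (listBdry c))) (by rw [map_sub, hv' c hc, sub_self])
  simp only [LinearMap.comp_apply, LinearMap.sub_apply, LinearMap.id_apply]
  rw [← hyc, hg' y hy, hyc, sub_add_cancel]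

end Homotopy

section Reduction

variable {K} {L : Type}

/-- Apply a family of linear maps behind the first entry of each list, with a sign. -/
def headMap (u : L → (List L →₀ K) →ₗ[K] (List L →₀ K)) : (List L →₀ K) →ₗ[K] (List L →₀ K) :=
  Finsupp.linearCombination K fun
    | [] => 0
    | x :: l => - consMap x (u x (single l 1))

lemma headMap_single_nil (u : L → (List L →₀ K) →ₗ[K] (List L →₀ K)) (a : K) :
    headMap u (single [] a) = 0 := by
  simp [headMap]

lemma headMap_consMap (u : L → (List L →₀ K) →ₗ[K] (List L →₀ K)) (x : L) (c : List L →₀ K) :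
    headMap u (consMap x c) = - consMap x (u x c) := by
  induction c using Finsupp.induction_linear with
  | zero => simp
  | add f g hf hg => simp only [map_add, hf, hg, neg_add]
  | single l a =>
    have : single l a = a • single l (1 : K) := by simp
    rw [this, map_smul, map_smul, map_smul, map_smul, consMap_single]
    simp [headMap]

lemma rTensor_listBdry_rTensor_listBdry (x : (List L →₀ K) ⊗[K] (List L →₀ K)) :
    listBdry.rTensor (List L →₀ K) (listBdry.rTensor (List L →₀ K) x) = 0 := by
  rw [← LinearMap.rTensor_comp_apply, show listBdry ∘ₗ listBdry =
    (0 : (List L →₀ K) →ₗ[K] (List L →₀ K)) from LinearMap.ext listBdry_listBdry]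
  simp

lemma lTensor_listBdry_lTensor_listBdry (x : (List L →₀ K) ⊗[K] (List L →₀ K)) :
    listBdry.lTensor (List L →₀ K) (listBdry.lTensor (List L →₀ K) x) = 0 := by
  rw [← LinearMap.lTensor_comp_apply, show listBdry ∘ₗ listBdry =
    (0 : (List L →₀ K) →ₗ[K] (List L →₀ K)) from LinearMap.ext listBdry_listBdry]
  simp

lemma rTensor_id_add_smul_add_smul (d U V : (List L →₀ K) →ₗ[K] (List L →₀ K))
    (x : (List L →₀ K) ⊗[K] (List L →₀ K)) :
    (LinearMap.id + (-1 : K) • d ∘ₗ U + (-1 : K) • V ∘ₗ d).rTensor (List L →₀ K) x =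
      x + (-1 : K) • d.rTensor _ (U.rTensor _ x) + (-1 : K) • V.rTensor _ (d.rTensor _ x) := by
  simp only [LinearMap.rTensor_add, LinearMap.rTensor_smul, LinearMap.rTensor_comp,
    LinearMap.rTensor_id, LinearMap.add_apply, LinearMap.smul_apply, LinearMap.comp_apply, LinearMap.id_apply]

lemma lTensor_id_add_smul_add_smul (d U V : (List L →₀ K) →ₗ[K] (List L →₀ K))
    (x : (List L →₀ K) ⊗[K] (List L →₀ K)) :
    (LinearMap.id + (-1 : K) • d ∘ₗ U + (-1 : K) • V ∘ₗ d).lTensor (List L →₀ K) x =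
      x + (-1 : K) • d.lTensor _ (U.lTensor _ x) + (-1 : K) • V.lTensor _ (d.lTensor _ x) := by
  simp only [LinearMap.lTensor_add, LinearMap.lTensor_smul, LinearMap.lTensor_comp,
    LinearMap.lTensor_id, LinearMap.add_apply, LinearMap.smul_apply, LinearMap.comp_apply, LinearMap.id_apply]

/-- One reduction step in a double complex `(d₁, d₂)` along a partial homotopy `(u, v)` of `d₁`. -/
lemma map_mem_of_homotopy {W M : Type*} [AddCommMonoid W] [Module K W] [AddCommGroup M]
    [Module K M] {d₁ d₂ u v : W →ₗ[K] W} (f : W →ₗ[K] M) {J : Submodule K W} {N : Submodule K M}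
    (hd : ∀ x, d₁ (d₁ x) = 0) (hdd : ∀ x, d₂ (d₁ x) = d₁ (d₂ x))
    (hu : ∀ x, d₂ (u x) = u (d₂ x)) (hv : ∀ x, d₂ (v x) = v (d₂ x))
    (hdJ : ∀ x ∈ J, d₁ x ∈ J) (huJ : ∀ x ∈ J, u x ∈ J) (hvJ : ∀ x ∈ J, v x ∈ J)
    (hf : ∀ x ∈ J, f x ∈ N) {r : W} (h₁ : d₁ r ∈ J) (h₂ : d₂ r ∈ J) {ε : K}
    (hε : f (d₁ (u r)) + ε • f (d₂ (u r)) ∈ N)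
    (hr : d₁ (r + (-1 : K) • d₁ (u r) + (-1 : K) • v (d₁ r)) ∈ J →
      d₂ (r + (-1 : K) • d₁ (u r) + (-1 : K) • v (d₁ r)) ∈ J →
      f (r + (-1 : K) • d₁ (u r) + (-1 : K) • v (d₁ r)) ∈ N) : f r ∈ N := by
  have h3 := hr
    (by
      rw [map_add, map_add, map_smul, map_smul, hd, smul_zero, add_zero]
      exact J.add_mem h₁ (J.smul_mem _ (hdJ _ (hvJ _ h₁))))
    (by
      rw [map_add, map_add, map_smul, map_smul, hdd, hu, hv, hdd]
      exact J.add_mem (J.add_mem h₂ (J.smul_mem _ (hdJ _ (huJ _ h₂))))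
        (J.smul_mem _ (hvJ _ (hdJ _ h₂))))
  have h4 : f (d₂ (u r)) ∈ N := hf _ (by rw [hu]; exact huJ _ h₂)
  have h5 : f (d₁ (u r)) ∈ N := by
    simpa using N.sub_mem hε (N.smul_mem ε h4)
  have h6 : f (v (d₁ r)) ∈ N := hf _ (hvJ _ h₁)
  rw [map_add, map_add, map_smul, map_smul, neg_one_smul, neg_one_smul] at h3
  simpa using N.add_mem (N.add_mem h3 h6) h5

variable [Lattice L] [OrderBot L]

lemma listSup_lt_of_mem_openChains {n : L} (hn : ⊥ < n) {l : List L} (hl : l ∈ openChains n) :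
    listSup l < n := by
  obtain _ | ⟨x, l⟩ := l
  · simpa [listSup] using hn
  · refine (listSup_le_iff.2 fun y hy => ?_).trans_lt (hl.2 x (by simp)).2
    rcases List.mem_cons.1 hy with rfl | hy
    · exact le_rfl
    · exact (List.rel_of_pairwise_cons hl.1 hy).le

lemma listSup_cons_of_mem_openChains {n : L} {l : List L} (hl : l ∈ openChains n) :
    listSup (n :: l) = n := by
  refine le_antisymm (listSup_le_iff.2 fun y hy => ?_) (le_listSup (by simp))
  rcases List.mem_cons.1 hy with rfl | hy
  · exact le_rfl
  · exact (hl.2 y hy).2.le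

lemma headMap_single_mem {m : L} {j : ℕ} {u : L → (List L →₀ K) →ₗ[K] (List L →₀ K)}
    (hu : ∀ n c, u n c ∈ supported K K (openChains n ∩ {l | l.length = j}))
    {l : List L} (hl : l ∈ goodLists m) :
    headMap u (single l (1 : K)) ∈
      supported K K {k | k ∈ chainLists m ∧ k.length = j + 1 ∧ listSup k ≤ listSup l} := by
  obtain _ | ⟨x, l⟩ := l
  · rw [headMap_single_nil]; exact Submodule.zero_mem _
  · rw [← consMap_single, headMap_consMap]
    refine Submodule.neg_mem _ (consMap_mem_supported (fun k hk => ?_) (hu x _))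
    refine ⟨cons_mem_chainLists hk.1 (hl x (by simp)).1 (hl x (by simp)).2, ?_, ?_⟩
    · simpa using hk.2
    · rw [listSup_cons_of_mem_openChains hk.1]
      exact le_listSup (by simp)

/-- A partial homotopy, compatible with joins, from the identity to a map that strictly lowers
the joins at which the reduced homology in level `k` vanishes. -/
lemma exists_filtered_homotopy (K : Type) [Field K] (m : L) (k : ℕ) :
    ∃ U V : (List L →₀ K) →ₗ[K] (List L →₀ K),
      (∀ l ∈ goodLists m, U (single l 1) ∈
        supported K K {l' | l' ∈ chainLists m ∧ l'.length = k + 2 ∧ listSup l' ≤ listSup l}) ∧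
      (∀ l ∈ goodLists m, V (single l 1) ∈
        supported K K {l' | l' ∈ chainLists m ∧ l'.length = k + 1 ∧ listSup l' ≤ listSup l}) ∧
      ∀ l ∈ chainLists m, l.length = k + 1 →
        single l 1 + (-1 : K) • listBdry (U (single l 1)) +
          (-1 : K) • V (listBdry (single l 1)) ∈
          supported K K {l' | l' ∈ chainLists m ∧ l'.length = k + 1 ∧ listSup l' ≤ listSup l ∧
            (¬ RHomNontrivial K (Set.Ioo (⊥ : L) (listSup l)) k → listSup l' < listSup l)} := by
  choose u v hu hv huv using fun n : L => exists_homotopy (K := K) n k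
  refine ⟨headMap u, headMap v, fun l hl => headMap_single_mem hu hl,
    fun l hl => headMap_single_mem hv hl, fun l hl hlen => ?_⟩
  rw [neg_one_smul, neg_one_smul, ← sub_eq_add_neg, ← sub_eq_add_neg]
  by_cases hR : RHomNontrivial K (Set.Ioo (⊥ : L) (listSup l)) k
  · have hle : ∀ c ∈ supported K K
        {l' | l' ∈ chainLists m ∧ l'.length = k + 1 ∧ listSup l' ≤ listSup l},
        c ∈ supported K K {l' | l' ∈ chainLists m ∧ l'.length = k + 1 ∧ listSup l' ≤ listSup l ∧
          (¬ RHomNontrivial K (Set.Ioo (⊥ : L) (listSup l)) k → listSup l' < listSup l)} :=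
      fun c hc => supported_mono (fun l' h =>
        And.intro h.1 ⟨h.2.1, h.2.2, fun hR' => absurd hR hR'⟩) hc
    refine hle _ ?_
    refine Submodule.sub_mem _ (Submodule.sub_mem _
      (single_mem_supported K _ ⟨hl, hlen, le_rfl⟩) ?_) ?_
    · refine listBdry_mem_supported (fun l' h k hk hk' => ?_) (headMap_single_mem hu hl.2)
      have := h.2.1
      exact ⟨chainLists_of_sublist h.1 hk, by omega, (listSup_mono hk.subset).trans h.2.2⟩
    · refine map_mem_of_mem_supported _ (fun l' hl' => ?_) (listBdry_single_mem l 1)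
      exact supported_mono (fun k hk => And.intro hk.1
        ⟨hk.2.1, hk.2.2.trans (listSup_mono hl'.1.subset)⟩)
        (headMap_single_mem hv (goodLists_of_subset hl.2 hl'.1.subset))
  · obtain _ | ⟨n, t⟩ := l
    · simp at hlen
    have ht := mem_openChains_of_cons hl
    have hn := hl.2 n (by simp)
    rw [listSup_cons_of_mem_openChains ht] at hR ⊢
    have hid := huv n hR (single t 1) (single_mem_supported K _ ⟨ht, by simpa using hlen⟩)
    have heq : single (n :: t) (1 : K) - listBdry (headMap u (single (n :: t) 1)) -
        headMap v (listBdry (single (n :: t) 1)) =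
        u n (single t 1) - headMap v (single t 1) := by
      rw [← consMap_single, headMap_consMap, map_neg, listBdry_consMap, listBdry_consMap, map_sub,
        headMap_consMap]
      nth_rw 1 [← hid]
      rw [map_add]
      abel
    rw [heq]
    refine Submodule.sub_mem _ (supported_mono (fun l' hl' => ?_) (hu n (single t 1)))
      (supported_mono (fun l' hl' => ?_)
        (headMap_single_mem hv (goodLists_of_subset hl.2 (List.subset_cons_self n t))))
    · have := listSup_lt_of_mem_openChains hn.1 hl'.1
      exact ⟨⟨hl'.1.1, fun x hx => ⟨(hl'.1.2 x hx).1, (hl'.1.2 x hx).2.le.trans hn.2⟩⟩, hl'.2,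
        this.le, fun _ => this⟩
    · have := hl'.2.2.trans_lt (listSup_lt_of_mem_openChains hn.1 ht)
      exact ⟨hl'.1, hl'.2.1, this.le, fun _ => this⟩

/-- The pairs of lists with entries in `(⊥, m]` whose total join is not `m`. -/
def lowPairs (K : Type) [Field K] (m : L) :
    Submodule K ((List L →₀ K) ⊗[K] (List L →₀ K)) :=
  pairSpan fun l l' => l ∈ goodLists m ∧ l' ∈ goodLists m ∧ ¬ m ≤ listSup l ⊔ listSup l'

lemma rTensor_mem_lowPairs {m : L} {f : (List L →₀ K) →ₗ[K] (List L →₀ K)}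
    (hf : ∀ l ∈ goodLists m, f (single l 1) ∈
      supported K K {l' | l' ∈ goodLists m ∧ listSup l' ≤ listSup l})
    {x : (List L →₀ K) ⊗[K] (List L →₀ K)} (hx : x ∈ lowPairs K m) :
    f.rTensor _ x ∈ lowPairs K m :=
  rTensor_mem_pairSpan f (fun l _ h => supported_mono (fun _ hk =>
    show _ ∧ _ from ⟨hk.1, h.2.1, fun hm => h.2.2 (hm.trans (sup_le_sup_right hk.2 _))⟩)
      (hf l h.1)) hx

lemma lTensor_mem_lowPairs {m : L} {f : (List L →₀ K) →ₗ[K] (List L →₀ K)}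
    (hf : ∀ l ∈ goodLists m, f (single l 1) ∈
      supported K K {l' | l' ∈ goodLists m ∧ listSup l' ≤ listSup l})
    {x : (List L →₀ K) ⊗[K] (List L →₀ K)} (hx : x ∈ lowPairs K m) :
    f.lTensor _ x ∈ lowPairs K m :=
  lTensor_mem_pairSpan f (fun _ l' h => supported_mono (fun _ hk =>
    show _ ∧ _ from ⟨h.1, hk.1, fun hm => h.2.2 (hm.trans (sup_le_sup_left hk.2 _))⟩)
      (hf l' h.2.1)) hx

lemma listBdry_single_mem_good {m : L} {l : List L} (hl : l ∈ goodLists m) :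
    listBdry (single l (1 : K)) ∈
      supported K K {l' | l' ∈ goodLists m ∧ listSup l' ≤ listSup l} :=
  supported_mono (fun _ hk => And.intro (goodLists_of_subset hl hk.1.subset)
    (listSup_mono hk.1.subset)) (listBdry_single_mem l 1)

lemma append_mem_goodLists {m : L} {l l' : List L} (hl : l ∈ goodLists m) (hl' : l' ∈ goodLists m) :
    l ++ l' ∈ goodLists m := fun x hx =>
  (List.mem_append.1 hx).elim (hl x) (hl' x)

lemma concatMap_mem_of_lowPairs {m : L} {x : (List L →₀ K) ⊗[K] (List L →₀ K)}
    (hx : x ∈ lowPairs K m) : concatMap x ∈ relBoundaries K m := by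
  refine mem_relBoundaries_of_low (concatMap_mem_supported (fun l l' h => ?_) hx)
  refine ⟨append_mem_goodLists h.1 h.2.1, fun hm => h.2.2 (hm.trans (listSup_le_iff.2 ?_))⟩
  intro x hx
  exact (List.mem_append.1 hx).elim (fun h => le_sup_of_le_left (le_listSup h))
    (fun h => le_sup_of_le_right (le_listSup h))

/-- The Leibniz rule modulo relative boundaries. -/
lemma concatMap_leibniz_mem {m : L} {p : ℕ} {x : (List L →₀ K) ⊗[K] (List L →₀ K)}
    (hx : x ∈ pairSpan fun l l' => l.length = p ∧ l ∈ goodLists m ∧ l' ∈ goodLists m) :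
    concatMap (listBdry.rTensor _ x) + (-1 : K) ^ p • concatMap (listBdry.lTensor _ x) ∈
      relBoundaries K m := by
  rw [← listBdry_concatMap (pairSpan_mono (fun l l' h => h.1) hx)]
  exact listBdry_mem_relBoundaries
    (concatMap_mem_supported (fun l l' h => append_mem_goodLists h.2.1 h.2.2) hx)

/-- Strictly decreasing lists of length `k + 1` whose join either lies below some `a` with
nonvanishing reduced homology in level `k`, or has fewer than `j` elements below it. -/
def stageLists (K : Type) [Field K] (m : L) (k j : ℕ) : Set (List L) :=
  {l | l ∈ chainLists m ∧ l.length = k + 1 ∧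
    ((∃ a, RHomNontrivial K (Set.Ioo (⊥ : L) a) k ∧ listSup l ≤ a) ∨
      (Set.Iio (listSup l)).ncard < j)}

lemma stageLists_step [Finite L] {m : L} {k j : ℕ} {l l' : List L}
    (hl : l ∈ stageLists K m k (j + 1)) (hl' : l' ∈ chainLists m) (hlen : l'.length = k + 1)
    (hle : listSup l' ≤ listSup l)
    (hlt : ¬ RHomNontrivial K (Set.Ioo (⊥ : L) (listSup l)) k → listSup l' < listSup l) :
    l' ∈ stageLists K m k j := by
  refine ⟨hl', hlen, ?_⟩
  by_cases hR : RHomNontrivial K (Set.Ioo (⊥ : L) (listSup l)) k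
  · exact Or.inl ⟨_, hR, hle⟩
  · rcases hl.2.2 with ⟨a, ha, hla⟩ | hj
    · exact Or.inl ⟨a, ha, hle.trans hla⟩
    · have h1 : (Set.Iio (listSup l')).ncard < (Set.Iio (listSup l)).ncard :=
        Set.ncard_lt_ncard (Set.Iio_ssubset_Iio (hlt hR)) (Set.toFinite _)
      exact Or.inr (by omega)

/-- Lowering the stage of the first factor. -/
lemma concatMap_mem_of_stageLists_left [Finite L] {m : L} {a b j j' : ℕ}
    {r : (List L →₀ K) ⊗[K] (List L →₀ K)}
    (hr : r ∈ pairSpan fun l l' => l ∈ stageLists K m a (j + 1) ∧ l' ∈ stageLists K m b j')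
    (h₁ : listBdry.rTensor _ r ∈ lowPairs K m) (h₂ : listBdry.lTensor _ r ∈ lowPairs K m)
    (ih : ∀ s : (List L →₀ K) ⊗[K] (List L →₀ K),
      s ∈ pairSpan (fun l l' => l ∈ stageLists K m a j ∧ l' ∈ stageLists K m b j') →
      listBdry.rTensor _ s ∈ lowPairs K m → listBdry.lTensor _ s ∈ lowPairs K m →
      concatMap s ∈ relBoundaries K m) :
    concatMap r ∈ relBoundaries K m := by
  obtain ⟨U, V, hU, hV, hUV⟩ := exists_filtered_homotopy K m a
  have hdJ : ∀ x ∈ lowPairs K m, listBdry.rTensor (List L →₀ K) x ∈ lowPairs K m :=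
    fun x hx => rTensor_mem_lowPairs (fun l hl => listBdry_single_mem_good hl) hx
  have huJ : ∀ x ∈ lowPairs K m, U.rTensor (List L →₀ K) x ∈ lowPairs K m :=
    fun x hx => rTensor_mem_lowPairs (fun l hl => supported_mono
      (fun k hk => And.intro hk.1.2 hk.2.2) (hU l hl)) hx
  have hvJ : ∀ x ∈ lowPairs K m, V.rTensor (List L →₀ K) x ∈ lowPairs K m :=
    fun x hx => rTensor_mem_lowPairs (fun l hl => supported_mono
      (fun k hk => And.intro hk.1.2 hk.2.2) (hV l hl)) hx
  have hur : U.rTensor (List L →₀ K) r ∈ pairSpan fun l l' =>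
      l.length = a + 2 ∧ l ∈ goodLists m ∧ l' ∈ goodLists m :=
    rTensor_mem_pairSpan U (fun l l' h => supported_mono
      (fun k hk => show _ ∧ _ from ⟨hk.2.1, hk.1.2, h.2.1.2⟩) (hU l h.1.1.2)) hr
  have hs : r + (-1 : K) • listBdry.rTensor (List L →₀ K) (U.rTensor (List L →₀ K) r) +
      (-1 : K) • V.rTensor (List L →₀ K) (listBdry.rTensor (List L →₀ K) r) ∈
      pairSpan fun l l' => l ∈ stageLists K m a j ∧ l' ∈ stageLists K m b j' := by
    have := rTensor_mem_pairSpan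
      (LinearMap.id + (-1 : K) • listBdry ∘ₗ U + (-1 : K) • V ∘ₗ listBdry)
      (R' := fun l l' => l ∈ stageLists K m a j ∧ l' ∈ stageLists K m b j')
      (fun l l' h => supported_mono (fun k hk => show _ ∧ _ from
        ⟨stageLists_step h.1 hk.1 hk.2.1 hk.2.2.1 hk.2.2.2, h.2⟩)
        (hUV l h.1.1 h.1.2.1)) hr
    rwa [rTensor_id_add_smul_add_smul] at this
  exact map_mem_of_homotopy (d₁ := listBdry.rTensor (List L →₀ K))
    (d₂ := listBdry.lTensor (List L →₀ K)) (u := U.rTensor (List L →₀ K))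
    (v := V.rTensor (List L →₀ K)) (J := lowPairs K m) (N := relBoundaries K m) concatMap
    rTensor_listBdry_rTensor_listBdry (lTensor_rTensor_comm _ _) (lTensor_rTensor_comm _ _)
    (lTensor_rTensor_comm _ _) hdJ huJ hvJ (fun x hx => concatMap_mem_of_lowPairs hx) h₁ h₂
    (concatMap_leibniz_mem hur) (ih _ hs)

/-- Lowering the stage of the second factor. -/
lemma concatMap_mem_of_stageLists_right [Finite L] {m : L} {a b j j' : ℕ}
    {r : (List L →₀ K) ⊗[K] (List L →₀ K)}
    (hr : r ∈ pairSpan fun l l' => l ∈ stageLists K m a j ∧ l' ∈ stageLists K m b (j' + 1))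
    (h₁ : listBdry.rTensor _ r ∈ lowPairs K m) (h₂ : listBdry.lTensor _ r ∈ lowPairs K m)
    (ih : ∀ s : (List L →₀ K) ⊗[K] (List L →₀ K),
      s ∈ pairSpan (fun l l' => l ∈ stageLists K m a j ∧ l' ∈ stageLists K m b j') →
      listBdry.rTensor _ s ∈ lowPairs K m → listBdry.lTensor _ s ∈ lowPairs K m →
      concatMap s ∈ relBoundaries K m) :
    concatMap r ∈ relBoundaries K m := by
  obtain ⟨U, V, hU, hV, hUV⟩ := exists_filtered_homotopy K m b
  have hdJ : ∀ x ∈ lowPairs K m, listBdry.lTensor (List L →₀ K) x ∈ lowPairs K m :=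
    fun x hx => lTensor_mem_lowPairs (fun l hl => listBdry_single_mem_good hl) hx
  have huJ : ∀ x ∈ lowPairs K m, U.lTensor (List L →₀ K) x ∈ lowPairs K m :=
    fun x hx => lTensor_mem_lowPairs (fun l hl => supported_mono
      (fun k hk => And.intro hk.1.2 hk.2.2) (hU l hl)) hx
  have hvJ : ∀ x ∈ lowPairs K m, V.lTensor (List L →₀ K) x ∈ lowPairs K m :=
    fun x hx => lTensor_mem_lowPairs (fun l hl => supported_mono
      (fun k hk => And.intro hk.1.2 hk.2.2) (hV l hl)) hx
  have hur : U.lTensor (List L →₀ K) r ∈ pairSpan fun l l' =>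
      l.length = a + 1 ∧ l ∈ goodLists m ∧ l' ∈ goodLists m :=
    lTensor_mem_pairSpan U (fun l l' h => supported_mono
      (fun k hk => show _ ∧ _ from ⟨h.1.2.1, h.1.1.2, hk.1.2⟩) (hU l' h.2.1.2)) hr
  have hs : r + (-1 : K) • listBdry.lTensor (List L →₀ K) (U.lTensor (List L →₀ K) r) +
      (-1 : K) • V.lTensor (List L →₀ K) (listBdry.lTensor (List L →₀ K) r) ∈
      pairSpan fun l l' => l ∈ stageLists K m a j ∧ l' ∈ stageLists K m b j' := by
    have := lTensor_mem_pairSpan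
      (LinearMap.id + (-1 : K) • listBdry ∘ₗ U + (-1 : K) • V ∘ₗ listBdry)
      (R' := fun l l' => l ∈ stageLists K m a j ∧ l' ∈ stageLists K m b j')
      (fun l l' h => supported_mono (fun k hk => show _ ∧ _ from
        ⟨h.1, stageLists_step h.2 hk.1 hk.2.1 hk.2.2.1 hk.2.2.2⟩)
        (hUV l' h.2.1 h.2.2.1)) hr
    rwa [lTensor_id_add_smul_add_smul] at this
  have hε := Submodule.smul_mem _ ((-1 : K) ^ (a + 1)) (concatMap_leibniz_mem hur)
  rw [smul_add, smul_smul, ← mul_pow, neg_one_mul, neg_neg, one_pow, one_smul, add_comm] at hε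
  exact map_mem_of_homotopy (d₁ := listBdry.lTensor (List L →₀ K))
    (d₂ := listBdry.rTensor (List L →₀ K)) (u := U.lTensor (List L →₀ K))
    (v := V.lTensor (List L →₀ K)) (J := lowPairs K m) (N := relBoundaries K m) concatMap
    lTensor_listBdry_lTensor_listBdry (fun x => (lTensor_rTensor_comm _ _ x).symm)
    (fun x => (lTensor_rTensor_comm _ _ x).symm) (fun x => (lTensor_rTensor_comm _ _ x).symm)
    hdJ huJ hvJ (fun x hx => concatMap_mem_of_lowPairs hx) h₂ h₁ hε (fun h h' => ih _ hs h' h)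

lemma concatMap_mem_of_stageLists [Finite L] {m : L} {a b : ℕ}
    (hab : ∀ n₁ n₂ : L, RHomNontrivial K (Set.Ioo (⊥ : L) n₁) a →
      RHomNontrivial K (Set.Ioo (⊥ : L) n₂) b → ¬ m ≤ n₁ ⊔ n₂)
    (j j' : ℕ) {r : (List L →₀ K) ⊗[K] (List L →₀ K)}
    (hr : r ∈ pairSpan fun l l' => l ∈ stageLists K m a j ∧ l' ∈ stageLists K m b j')
    (h₁ : listBdry.rTensor _ r ∈ lowPairs K m) (h₂ : listBdry.lTensor _ r ∈ lowPairs K m) :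
    concatMap r ∈ relBoundaries K m := by
  induction j generalizing r with
  | succ j ih => exact concatMap_mem_of_stageLists_left hr h₁ h₂ fun s hs h h' => ih hs h h'
  | zero =>
    induction j' generalizing r with
    | succ j' ih => exact concatMap_mem_of_stageLists_right hr h₁ h₂ fun s hs h h' => ih hs h h'
    | zero =>
      refine concatMap_mem_of_lowPairs (pairSpan_mono (fun l l' h => ?_) hr)
      obtain ⟨⟨hl, -, ⟨n₁, hn₁, hle₁⟩ | h⟩, hl', -, ⟨n₂, hn₂, hle₂⟩ | h'⟩ := h
      · exact ⟨hl.2, hl'.2, fun hm => hab n₁ n₂ hn₁ hn₂ (hm.trans (sup_le_sup hle₁ hle₂))⟩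
      all_goals omega

lemma splitMap_mem_lowPairs {m : L} (p : ℕ) {c : List L →₀ K}
    (hc : c ∈ supported K K (lowLists m)) : splitMap p c ∈ lowPairs K m :=
  splitMap_mem_pairSpan (fun _ hl _ _ h₁ h₂ _ _ =>
    ⟨goodLists_of_subset hl.1 h₁.subset, goodLists_of_subset hl.1 h₂.subset, fun hm =>
      hl.2 (hm.trans (sup_le (listSup_mono h₁.subset) (listSup_mono h₂.subset)))⟩) hc

/-- A relative cycle is a relative boundary as soon as its `p`-th split is one. -/
lemma mem_relBoundaries_of_split {m : L} {p i : ℕ} (hp : p + 1 ≤ i) {z : List L →₀ K}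
    (hz : z ∈ supported K K (chainLists m ∩ {l | l.length = i}))
    (hdz : listBdry z ∈ supported K K (lowLists m))
    (h : concatMap (listBdry.lTensor _ (splitMap p z)) ∈ relBoundaries K m) :
    z ∈ relBoundaries K m := by
  have hleib : ∀ q, concatMap (listBdry.rTensor _ (splitMap q z)) +
      (-1 : K) ^ (q + 1) • concatMap (listBdry.lTensor _ (splitMap q z)) ∈ relBoundaries K m :=
    fun q => concatMap_leibniz_mem (splitMap_mem_pairSpan (fun _ hl _ _ h₁ h₂ hlen _ =>
      ⟨hlen, goodLists_of_subset hl.1.2 h₁.subset, goodLists_of_subset hl.1.2 h₂.subset⟩) hz)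
  induction p with
  | zero =>
    have h1 := Submodule.sub_mem _ (hleib 0) (Submodule.smul_mem _ ((-1 : K) ^ (0 + 1)) h)
    rwa [add_sub_cancel_right, concatMap_rTensor_listBdry_splitMap_zero
      (supported_mono (fun l hl => show 1 ≤ l.length by
        have : l.length = i := hl.2; omega) hz)] at h1
  | succ p ih =>
    refine ih (by omega) ?_
    have h1 := Submodule.sub_mem _ (hleib (p + 1))
      (Submodule.smul_mem _ ((-1 : K) ^ (p + 1 + 1)) h)
    rw [add_sub_cancel_right, rTensor_listBdry_splitMap_succ p
      (supported_mono (fun l hl => show p + 2 ≤ l.length by have : l.length = i := hl.2; omega) hz),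
      map_add, map_smul] at h1
    have h2 := concatMap_mem_of_lowPairs (splitMap_mem_lowPairs p hdz)
    have h3 := Submodule.smul_mem _ ((-1 : K) ^ (p + 1)) (Submodule.sub_mem _ h1 h2)
    rwa [add_sub_cancel_left, smul_smul, ← mul_pow, neg_one_mul, neg_neg, one_pow, one_smul] at h3

/-- The `p`-th split of a relative cycle is a relative cycle for the left boundary. -/
lemma rTensor_listBdry_split_mem {m : L} {p i : ℕ} (hp : p + 1 ≤ i) {z : List L →₀ K}
    (hz : z ∈ supported K K (chainLists m ∩ {l | l.length = i}))
    (hdz : listBdry z ∈ supported K K (lowLists m)) :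
    listBdry.rTensor _ (listBdry.lTensor _ (splitMap p z)) ∈ lowPairs K m := by
  rw [← lTensor_rTensor_comm]
  obtain _ | p := p
  · have h1 : listBdry.rTensor (List L →₀ K) (splitMap 0 z) = single [] (1 : K) ⊗ₜ[K] z := by
      refine map_map_eq_of_mem_supported (f' := listBdry.rTensor (List L →₀ K))
        (g := TensorProduct.mk K (List L →₀ K) (List L →₀ K) (single [] (1 : K)))
        (g' := LinearMap.id) (fun l hl => ?_) hz
      obtain _ | ⟨x, l⟩ := l
      · have : 0 = i := hl.2
        omega
      · simp [splitMap, splitList, listBdry_single_cons]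
    rw [h1, LinearMap.lTensor_tmul]
    refine map_mem_of_mem_supported
      (TensorProduct.mk K (List L →₀ K) (List L →₀ K) (single [] (1 : K))) (fun l hl => ?_) hdz
    exact tmul_mem_pairSpan ⟨by simp [goodLists], hl.1, by simpa [listSup] using hl.2⟩
  · rw [rTensor_listBdry_splitMap_succ p
      (supported_mono (fun l hl => show p + 2 ≤ l.length by have : l.length = i := hl.2; omega) hz),
      map_add, map_smul, lTensor_listBdry_lTensor_listBdry, smul_zero, add_zero]
    exact lTensor_mem_lowPairs (fun l hl => listBdry_single_mem_good hl)
      (splitMap_mem_lowPairs p hdz)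

end Reduction

/-- Let `L` be a finite lattice with minimum element `0̂ = ⊥` and let
`i₁, i₂ ≥ 1`.  If there is `m ∈ L` with `H̃_{i₁+i₂-2}((0̂, m)) ≠ 0` (reduced simplicial
homology with coefficients in the field `K` of the order complex of the open interval;
degree `d` corresponds to level `d + 1`), then there exist `n₁, n₂ ∈ L` with
`H̃_{i₁-2}((0̂, n₁)) ≠ 0`, `H̃_{i₂-2}((0̂, n₂)) ≠ 0` and `n₁ ⊔ n₂ ≥ m`. -/
theorem subadditivity_homology_lattice
    (L : Type) [Lattice L] [OrderBot L] [Fintype L]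
    (i₁ i₂ : ℕ) (hi₁ : 1 ≤ i₁) (hi₂ : 1 ≤ i₂) (m : L)
    (hm : RHomNontrivial K ↥(Set.Ioo (⊥ : L) m) (i₁ + i₂ - 1)) :
    ∃ n₁ n₂ : L,
      RHomNontrivial K ↥(Set.Ioo (⊥ : L) n₁) (i₁ - 1) ∧
      RHomNontrivial K ↥(Set.Ioo (⊥ : L) n₂) (i₂ - 1) ∧
      m ≤ n₁ ⊔ n₂ := by
  by_contra hcon
  have hab : ∀ n₁ n₂ : L, RHomNontrivial K (Set.Ioo (⊥ : L) n₁) (i₁ - 1) →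
      RHomNontrivial K (Set.Ioo (⊥ : L) n₂) (i₂ - 1) → ¬ m ≤ n₁ ⊔ n₂ :=
    fun n₁ n₂ h₁ h₂ hle => hcon ⟨n₁, n₂, h₁, h₂, hle⟩
  obtain ⟨z, hz, hdz, hnb⟩ := exists_cycle_of_rHomNontrivial hm
  have hpos : ∀ l ∈ openChains m ∩ {l | l.length = i₁ + i₂ - 1}, ⊥ < m := by
    rintro (_ | ⟨x, l⟩) ⟨hl, hlen⟩
    · have : 0 = i₁ + i₂ - 1 := hlen
      omega
    · exact (hl.2 x (by simp)).1.trans (hl.2 x (by simp)).2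
  have hmz : consMap m z ∈ supported K K (chainLists m ∩ {l | l.length = i₁ + i₂}) := by
    refine consMap_mem_supported (fun l hl => ?_) hz
    have : l.length = i₁ + i₂ - 1 := hl.2
    exact ⟨cons_mem_chainLists hl.1 (hpos l hl) le_rfl,
      show l.length + 1 = i₁ + i₂ by omega⟩
  have hbz : listBdry (consMap m z) ∈ supported K K (lowLists m) := by
    rw [listBdry_consMap, hdz, map_zero, sub_zero]
    exact supported_mono (fun l hl => show _ ∧ _ from
      ⟨fun x hx => ⟨(hl.1.2 x hx).1, (hl.1.2 x hx).2.le⟩,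
        (listSup_lt_of_mem_openChains (hpos l hl) hl.1).not_ge⟩) hz
  have hcard : ∀ l : List L, (Set.Iio (listSup l)).ncard < Nat.card L + 1 := fun l =>
    Nat.lt_succ_of_le ((Set.ncard_le_ncard (Set.subset_univ _)).trans (Set.ncard_univ L).le)
  have hr : listBdry.lTensor (List L →₀ K) (splitMap (i₁ - 1) (consMap m z)) ∈
      pairSpan fun l l' => l ∈ stageLists K m (i₁ - 1) (Nat.card L + 1) ∧
        l' ∈ stageLists K m (i₂ - 1) (Nat.card L + 1) := by
    refine lTensor_mem_pairSpan (R := fun l l' => l ∈ stageLists K m (i₁ - 1) (Nat.card L + 1) ∧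
      l' ∈ chainLists m ∧ l'.length = i₂ + 1) listBdry (fun l l' h => ?_)
      (splitMap_mem_pairSpan (fun l hl l₁ l₂ h₁ h₂ hlen₁ hlen₂ => ?_) hmz)
    · refine supported_mono (fun k hk => ?_) (listBdry_single_mem l' 1)
      have hlen := hk.2
      exact ⟨h.1, chainLists_of_sublist h.2.1 hk.1, by omega, Or.inr (hcard k)⟩
    · have hlen : l.length = i₁ + i₂ := hl.2
      exact ⟨⟨chainLists_of_sublist hl.1 h₁, hlen₁, Or.inr (hcard l₁)⟩,
        chainLists_of_sublist hl.1 h₂, by omega⟩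
  have hc := concatMap_mem_of_stageLists hab _ _ hr
    (rTensor_listBdry_split_mem (by omega) hmz hbz)
    (by rw [lTensor_listBdry_lTensor_listBdry]; exact Submodule.zero_mem _)
  obtain ⟨y, hy, hyz⟩ := exists_listBdry_eq_of_mem_relBoundaries
    (supported_mono Set.inter_subset_left hmz)
    (mem_relBoundaries_of_split (by omega) hmz hbz hc)
  exact hnb y hy hyz

end
end

section
/- For integers i, j ≥ 0, let τ_ℓ denote the transposition of ℓ−1 and ℓ in the symmetric group on {0,…,i+j+1}, and define T_{i,j} : A₁^{i,j} → A₂^{i,j} by T_{i,j}(ℓ,σ) = (ℓ, σ∘τ_ℓ). Then: (i) T_{i,j} is a bijection from A₁^{i,j} onto A₂^{i,j}; (ii) sgn(σ∘τ_ℓ) = −sgn(σ) for every permutation σ of {0,…,i+j+1} and every ℓ ≥ 1; (iii) for every i-multichain c = (c₀ ≥ … ≥ c_i), every j-multichain c′ = (c_{i+1} ≥ … ≥ c_{i+j+1}) in a finite lattice L, and every (ℓ,σ) ∈ A₁^{i,j}, one has ∂_{i+j+1}^{(ℓ)}[τ((c·c′)_σ)] = ∂_{i+j+1}^{(ℓ)}[τ((c·c′)_{σ∘τ_ℓ})].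 -/
open Finsupp

noncomputable section

variable (K : Type) [Field K] (L : Type) [SemilatticeSup L]

/-- Order multichains with `n` entries (length `n - 1`) in the lattice `L`:
weakly decreasing tuples `(c₀ ≥ c₁ ≥ ⋯ ≥ c_{n-1})`. -/
def MChain (n : ℕ) : Type := {c : Fin n → L // Antitone c}

/-- `∂ₖ^{(j)}`: deletion of the `k`-th entry of an order multichain. -/
def mdel {n : ℕ} (k : Fin (n + 1)) (c : MChain L (n + 1)) : MChain L n :=
  ⟨c.1 ∘ k.succAbove, c.2.comp_monotone (Fin.strictMono_succAbove k).monotone⟩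

/-- Concatenation `c · c′` of tuples. -/
def concatT {a b n : ℕ} (h : a + b = n) (u : Fin a → L) (v : Fin b → L) : Fin n → L :=
  fun r => if hr : (r : ℕ) < a then u ⟨r, hr⟩ else v ⟨(r : ℕ) - a, by have := r.2; omega⟩

/-- The operator `τ` sending a tuple `(a₀, …, a_{n-1})` to the multichain
`(a₀ ∨ ⋯ ∨ a_{n-1} ≥ a₁ ∨ ⋯ ∨ a_{n-1} ≥ ⋯ ≥ a_{n-1})` of suffix joins. -/
def tauMul {n : ℕ} (a : Fin n → L) : MChain L n :=
  ⟨fun r => (Finset.Ici r).sup' ⟨r, Finset.mem_Ici.mpr le_rfl⟩ a, by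
    intro r r' hrr'
    apply Finset.sup'_le
    intro s hs
    exact Finset.le_sup' _ (Finset.mem_Ici.mpr (le_trans hrr' (Finset.mem_Ici.mp hs)))⟩

/-- An `(i,j)`-shuffle, in block form: `IsShuffleBlocks t σ` says that the permutation `σ`
is monotone on the preimage of the values `{0, …, t-1}` (the first block) and on the
preimage of the remaining values (the second block).  An `(i,j)`-shuffle of
`{0, 1, …, i+j+1}` is exactly `IsShuffleBlocks (i+1)`. -/
def IsShuffleBlocks {n : ℕ} (t : ℕ) (σ : Equiv.Perm (Fin n)) : Prop :=
  (∀ p q : Fin n, p < q → (σ p : ℕ) < t → (σ q : ℕ) < t → σ p < σ q) ∧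
  (∀ p q : Fin n, p < q → t ≤ (σ p : ℕ) → t ≤ (σ q : ℕ) → σ p < σ q)

/-- The index `ℓ - 1` (with the convention `0 - 1 = 0`). -/
def prevIdx {n : ℕ} (ℓ : Fin n) : Fin n := ⟨(ℓ : ℕ) - 1, by have := ℓ.2; omega⟩

/-- The set `A₁^{i,j}` of pairs `(ℓ, σ)` with `σ` an `(i,j)`-shuffle, `ℓ ≥ 1`,
`σ(ℓ-1) ∈ {0,…,i}` and `σ(ℓ) ∈ {i+1,…,i+j+1}`. -/
def shuffleA1 (i j : ℕ) : Set (Fin (i + j + 2) × Equiv.Perm (Fin (i + j + 2))) :=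
  {p | IsShuffleBlocks (i + 1) p.2 ∧ 1 ≤ (p.1 : ℕ) ∧
       (p.2 (prevIdx p.1) : ℕ) ≤ i ∧ i + 1 ≤ (p.2 p.1 : ℕ)}

/-- The set `A₂^{i,j}` of pairs `(ℓ, σ)` with `σ` an `(i,j)`-shuffle, `ℓ ≥ 1`,
`σ(ℓ-1) ∈ {i+1,…,i+j+1}` and `σ(ℓ) ∈ {0,…,i}`. -/
def shuffleA2 (i j : ℕ) : Set (Fin (i + j + 2) × Equiv.Perm (Fin (i + j + 2))) :=
  {p | IsShuffleBlocks (i + 1) p.2 ∧ 1 ≤ (p.1 : ℕ) ∧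
       i + 1 ≤ (p.2 (prevIdx p.1) : ℕ) ∧ (p.2 p.1 : ℕ) ≤ i}

/-- The set `A₃^{i,j}` of pairs `(ℓ, σ)` with `σ` an `(i,j)`-shuffle and
`σ(ℓ-1), σ(ℓ) ∈ {0,…,i}`, the condition on `σ(ℓ-1)` being regarded as true for `ℓ = 0`. -/
def shuffleA3 (i j : ℕ) : Set (Fin (i + j + 2) × Equiv.Perm (Fin (i + j + 2))) :=
  {p | IsShuffleBlocks (i + 1) p.2 ∧
       (1 ≤ (p.1 : ℕ) → (p.2 (prevIdx p.1) : ℕ) ≤ i) ∧ (p.2 p.1 : ℕ) ≤ i}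

theorem prevIdx_ne {n : ℕ} {l : Fin n} (hl : 1 ≤ (l : ℕ)) : prevIdx l ≠ l := by
  intro h
  have := congrArg Fin.val h
  simp only [prevIdx] at this
  omega

/-- An adjacent transposition preserves the order of every pair except the transposed one. -/
theorem swap_prevIdx_lt {n : ℕ} {l p q : Fin n} (hpq : p < q)
    (hne : ¬(p = prevIdx l ∧ q = l)) :
    Equiv.swap (prevIdx l) l p < Equiv.swap (prevIdx l) l q := by
  simp only [Equiv.swap_apply_def, prevIdx, Fin.ext_iff, Fin.lt_def] at *
  split_ifs <;> (try dsimp only) <;> omega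

/-- Transposing adjacent positions whose values lie in different blocks preserves shuffles. -/
theorem IsShuffleBlocks.mul_swap {n t : ℕ} {σ : Equiv.Perm (Fin n)} (hσ : IsShuffleBlocks t σ)
    {l : Fin n} (h : ¬((σ (prevIdx l) : ℕ) < t ↔ (σ l : ℕ) < t)) :
    IsShuffleBlocks t (σ * Equiv.swap (prevIdx l) l) := by
  constructor <;> intro p q hpq hp hq <;> simp only [Equiv.Perm.mul_apply] at hp hq ⊢
  · refine hσ.1 _ _ (swap_prevIdx_lt hpq ?_) hp hq
    rintro ⟨rfl, rfl⟩
    simp only [Equiv.swap_apply_left, Equiv.swap_apply_right] at hp hq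
    tauto
  · refine hσ.2 _ _ (swap_prevIdx_lt hpq ?_) hp hq
    rintro ⟨rfl, rfl⟩
    simp only [Equiv.swap_apply_left, Equiv.swap_apply_right] at hp hq
    omega

theorem le_swap_prevIdx {n : ℕ} {l r s : Fin n} (hr : r ≠ l) (hs : r ≤ s) :
    r ≤ Equiv.swap (prevIdx l) l s := by
  simp only [Equiv.swap_apply_def, prevIdx, ne_eq, Fin.ext_iff, Fin.le_def] at *
  split_ifs <;> (try dsimp only) <;> omega

theorem tauMul_comp_swap_le {n : ℕ} (a : Fin n → L) {l r : Fin n} (hr : r ≠ l) :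
    (tauMul L (a ∘ Equiv.swap (prevIdx l) l)).1 r ≤ (tauMul L a).1 r :=
  Finset.sup'_le ⟨r, Finset.mem_Ici.mpr le_rfl⟩ _ fun _ hs =>
    Finset.le_sup' a (Finset.mem_Ici.mpr (le_swap_prevIdx hr (Finset.mem_Ici.mp hs)))

/-- Away from position `l`, suffix joins do not see the transposition of `l - 1` and `l`. -/
theorem tauMul_comp_swap {n : ℕ} (a : Fin n → L) {l r : Fin n} (hr : r ≠ l) :
    (tauMul L (a ∘ Equiv.swap (prevIdx l) l)).1 r = (tauMul L a).1 r := by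
  refine (tauMul_comp_swap_le L a hr).antisymm ?_
  have h := tauMul_comp_swap_le L (a ∘ Equiv.swap (prevIdx l) l) hr
  have e : (a ∘ Equiv.swap (prevIdx l) l) ∘ Equiv.swap (prevIdx l) l = a := by
    ext s
    simp
  rwa [e] at h

theorem mdel_tauMul_comp_swap {n : ℕ} (a : Fin (n + 1) → L) (l : Fin (n + 1)) :
    mdel L l (tauMul L (a ∘ Equiv.swap (prevIdx l) l)) = mdel L l (tauMul L a) :=
  Subtype.ext <| funext fun r => tauMul_comp_swap L a (Fin.succAbove_ne l r)

/-- For `i, j ≥ 0` let `τ_ℓ` be the transposition of `ℓ-1` and `ℓ` and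
let `T_{i,j}(ℓ, σ) = (ℓ, σ ∘ τ_ℓ)`.  Then
(i) `T_{i,j}` is a bijection from `A₁^{i,j}` onto `A₂^{i,j}`;
(ii) `sgn(σ ∘ τ_ℓ) = - sgn(σ)` for every permutation `σ` of `{0,…,i+j+1}` and `ℓ ≥ 1`;
(iii) for all multichains `c = (c₀ ≥ ⋯ ≥ c_i)`, `c′ = (c_{i+1} ≥ ⋯ ≥ c_{i+j+1})` in the
finite lattice `L` and every `(ℓ, σ) ∈ A₁^{i,j}`,
`∂_{i+j+1}^{(ℓ)}[τ((c·c′)_σ)] = ∂_{i+j+1}^{(ℓ)}[τ((c·c′)_{σ∘τ_ℓ})]`. -/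
theorem transposition_bijection_A1_A2 [Fintype L] (i j : ℕ) :
    (Set.BijOn (fun p : Fin (i + j + 2) × Equiv.Perm (Fin (i + j + 2)) =>
        (p.1, p.2 * Equiv.swap (prevIdx p.1) p.1)) (shuffleA1 i j) (shuffleA2 i j)) ∧
    (∀ (σ : Equiv.Perm (Fin (i + j + 2))) (ℓ : Fin (i + j + 2)), 1 ≤ (ℓ : ℕ) →
        Equiv.Perm.sign (σ * Equiv.swap (prevIdx ℓ) ℓ) = - Equiv.Perm.sign σ) ∧
    (∀ (c : MChain L (i + 1)) (c' : MChain L (j + 1))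
        (p : Fin (i + j + 2) × Equiv.Perm (Fin (i + j + 2))), p ∈ shuffleA1 i j →
        mdel L p.1 (tauMul L (concatT L (by omega) c.1 c'.1 ∘ ⇑p.2)) =
        mdel L p.1 (tauMul L (concatT L (by omega) c.1 c'.1 ∘
          ⇑(p.2 * Equiv.swap (prevIdx p.1) p.1)))) := by
  refine ⟨⟨?_, ?_, ?_⟩, ?_, ?_⟩
  · rintro ⟨l, σ⟩ ⟨hσ, hl, h₁, h₂⟩
    dsimp only at hσ hl h₁ h₂
    refine ⟨hσ.mul_swap (l := l) (by omega), hl, ?_, ?_⟩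
    · simpa using h₂
    · simpa using h₁
  · rintro ⟨l, σ⟩ - ⟨l', σ'⟩ - h
    simp only [Prod.mk.injEq] at h
    obtain ⟨rfl, h⟩ := h
    rw [mul_right_cancel h]
  · rintro ⟨l, σ⟩ ⟨hσ, hl, h₁, h₂⟩
    dsimp only at hσ hl h₁ h₂
    refine ⟨(l, σ * Equiv.swap (prevIdx l) l), ⟨hσ.mul_swap (l := l) (by omega), hl, ?_, ?_⟩, ?_⟩
    · simpa using h₂
    · simpa using h₁
    · simp [mul_assoc]
  · intro σ l hl
    rw [Equiv.Perm.sign_mul, Equiv.Perm.sign_swap (prevIdx_ne hl), mul_neg_one]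
  · intro c c' p _
    exact (mdel_tauMul_comp_swap L _ p.1).symm

end
end

section
/- For integers i, j ≥ 0: (i) the relation φ ∘ ∂_{i+j+1}^{(m)} = ∂_{i+j+1}^{(ℓ)} ∘ σ, as maps on (i+j+2)-tuples (where ∂^{(k)} deletes the k-th entry and a permutation π sends a tuple a to a_π), determines a well-defined map Ω_{i,j} : A₃^{i,j} → {0,…,i} × S_{i−1,j} with Ω_{i,j}(ℓ,σ) = (m,φ), and Ω_{i,j} is a bijection; (ii) whenever Ω_{i,j}(ℓ,σ) = (m,φ), one has (−1)^ℓ sgn(σ) = (−1)^m sgn(φ); (iii) for every i-multichain c = (c₀ ≥ … ≥ c_i) and j-multichain c′ = (c_{i+1} ≥ … ≥ c_{i+j+1}) in a finite lattice L, and every (ℓ,σ) ∈ A₃^{i,j} with Ω_{i,j}(ℓ,σ) = (m,φ), one has ∂_{i+j+1}^{(ℓ)}[τ((c·c′)_σ)] = τ(∂_{i+j+1}^{(ℓ)}[(c·c′)_σ]) = τ((∂_{i+j+1}^{(m)}(c·c′))_φ). -/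
open Finsupp

noncomputable section

variable (K : Type) [Field K] (L : Type) [SemilatticeSup L]

/-- The defining relation of `Ω_{i,j}`: `φ ∘ ∂_{i+j+1}^{(m)} = ∂_{i+j+1}^{(ℓ)} ∘ σ` as maps
on `(i+j+2)`-tuples, where `∂^{(k)}` deletes the `k`-th entry and a permutation `π` sends a
tuple `a` to `a_π = a ∘ π`.  Applied to a tuple `a` this reads
`a ∘ (m.succAbove ∘ φ) = a ∘ (σ ∘ ℓ.succAbove)`, so the relation is equivalent to the
following equality of index maps. -/
def omegaRel (i j : ℕ) (ℓ : Fin (i + j + 2)) (σ : Equiv.Perm (Fin (i + j + 2)))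
    (m : Fin (i + 1)) (φ : Equiv.Perm (Fin (i + j + 1))) : Prop :=
  (Fin.castLE (by omega) m).succAbove ∘ ⇑φ = ⇑σ ∘ ℓ.succAbove

/-- The permutation of `Fin (n + 1)` sending `ℓ` to `m` and acting as `φ` on the remaining
positions and values. -/
def permInsert {n : ℕ} (ℓ m : Fin (n + 1)) (φ : Equiv.Perm (Fin n)) :
    Equiv.Perm (Fin (n + 1)) :=
  m.cycleRange⁻¹ * Equiv.Perm.decomposeFin.symm (0, φ) * ℓ.cycleRange

theorem permInsert_apply_self {n : ℕ} (ℓ m : Fin (n + 1)) (φ : Equiv.Perm (Fin n)) :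
    permInsert ℓ m φ ℓ = m := by
  simp [permInsert, Equiv.Perm.inv_def]

theorem permInsert_apply_succAbove {n : ℕ} (ℓ m : Fin (n + 1)) (φ : Equiv.Perm (Fin n))
    (k : Fin n) : permInsert ℓ m φ (ℓ.succAbove k) = m.succAbove (φ k) := by
  simp [permInsert, Equiv.Perm.inv_def]

theorem sign_permInsert {n : ℕ} (ℓ m : Fin (n + 1)) (φ : Equiv.Perm (Fin n)) :
    Equiv.Perm.sign (permInsert ℓ m φ) =
      (-1) ^ (m : ℕ) * Equiv.Perm.sign φ * (-1) ^ (ℓ : ℕ) := by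
  simp [permInsert, Equiv.Perm.decomposeFin.symm_sign]

/-- Deleting position `ℓ` and value `m` from `σ` leaves `φ` exactly when `σ` is obtained by
inserting `ℓ ↦ m` into `φ`. -/
theorem succAbove_comp_eq_iff {n : ℕ} (ℓ m : Fin (n + 1)) (σ : Equiv.Perm (Fin (n + 1)))
    (φ : Equiv.Perm (Fin n)) :
    m.succAbove ∘ φ = σ ∘ ℓ.succAbove ↔ σ = permInsert ℓ m φ := by
  constructor
  · intro h
    have hk (k : Fin n) : σ (ℓ.succAbove k) = m.succAbove (φ k) := (congrFun h k).symm
    refine Equiv.ext fun x => ?_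
    induction x using Fin.succAboveCases ℓ with
    | x =>
      rw [permInsert_apply_self]
      by_contra hne
      obtain ⟨k, hk'⟩ := Fin.exists_succAbove_eq hne
      have := hk (φ.symm k)
      rw [Equiv.apply_symm_apply, hk'] at this
      exact Fin.succAbove_ne _ _ (σ.injective this)
    | p k => rw [permInsert_apply_succAbove, hk]
  · rintro rfl
    funext k
    exact (permInsert_apply_succAbove ℓ m φ k).symm

theorem exists_eq_permInsert {n : ℕ} (ℓ : Fin (n + 1)) (σ : Equiv.Perm (Fin (n + 1))) :
    ∃ φ, σ = permInsert ℓ (σ ℓ) φ := by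
  have h (k : Fin n) : ∃ r, (σ ℓ).succAbove r = σ (ℓ.succAbove k) :=
    Fin.exists_succAbove_eq fun h => Fin.succAbove_ne _ _ (σ.injective h)
  choose f hf using h
  have hinj : Function.Injective f := fun a b hab => by
    have := hf a
    rw [hab, hf b] at this
    exact (Fin.succAbove_right_injective (σ.injective this)).symm
  refine ⟨Equiv.ofBijective f (Finite.injective_iff_bijective.mp hinj), ?_⟩
  rw [← succAbove_comp_eq_iff]
  exact funext hf

theorem permInsert_right_injective {n : ℕ} (ℓ m : Fin (n + 1)) :
    Function.Injective (permInsert ℓ m) := fun φ ψ h => by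
  refine Equiv.ext fun k => Fin.succAbove_right_injective (p := m) ?_
  rw [← permInsert_apply_succAbove ℓ, h, permInsert_apply_succAbove]

theorem succAbove_val {n : ℕ} (p : Fin (n + 1)) (k : Fin n) :
    (p.succAbove k : ℕ) = if (k : ℕ) < p then (k : ℕ) else k + 1 := by
  simp only [Fin.succAbove, Fin.lt_def, Fin.val_castSucc]
  split_ifs <;> simp

theorem isShuffleBlocks_permInsert_iff {n t : ℕ} (ℓ m : Fin (n + 1)) (φ : Equiv.Perm (Fin n))
    (hm : (m : ℕ) ≤ t) :
    IsShuffleBlocks (t + 1) (permInsert ℓ m φ) ↔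
      IsShuffleBlocks t φ ∧ ∀ k, (φ k : ℕ) < t → ((k : ℕ) < ℓ ↔ (φ k : ℕ) < m) := by
  constructor
  · rintro ⟨h₁, h₂⟩
    refine ⟨⟨fun p q hpq hp hq => ?_, fun p q hpq hp hq => ?_⟩, fun k hk => ?_⟩
    · have := h₁ (ℓ.succAbove p) (ℓ.succAbove q) (Fin.strictMono_succAbove ℓ hpq)
      simp only [permInsert_apply_succAbove, Fin.succAbove_lt_succAbove_iff] at this
      apply this <;> rw [succAbove_val] <;> split_ifs <;> omega
    · have := h₂ (ℓ.succAbove p) (ℓ.succAbove q) (Fin.strictMono_succAbove ℓ hpq)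
      simp only [permInsert_apply_succAbove, Fin.succAbove_lt_succAbove_iff] at this
      apply this <;> rw [succAbove_val] <;> split_ifs <;> omega
    · have h₃ := h₁ (ℓ.succAbove k) ℓ
      have h₄ := h₁ ℓ (ℓ.succAbove k)
      simp only [permInsert_apply_succAbove, permInsert_apply_self, Fin.lt_def,
        succAbove_val] at h₃ h₄
      split_ifs at h₃ h₄ <;> omega
  · rintro ⟨⟨h₁, h₂⟩, h₃⟩
    constructor
    · intro p q hpq hp hq
      induction p using Fin.succAboveCases ℓ with
      | x =>
        induction q using Fin.succAboveCases ℓ with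
        | x => exact absurd hpq (lt_irrefl _)
        | p k =>
          have := h₃ k
          simp only [permInsert_apply_succAbove, permInsert_apply_self, Fin.lt_def,
            succAbove_val] at hpq hp hq ⊢
          split_ifs at hpq hp hq ⊢ <;> omega
      | p k =>
        induction q using Fin.succAboveCases ℓ with
        | x =>
          have := h₃ k
          simp only [permInsert_apply_succAbove, permInsert_apply_self, Fin.lt_def,
            succAbove_val] at hpq hp hq ⊢
          split_ifs at hpq hp hq ⊢ <;> omega
        | p r =>
          simp only [permInsert_apply_succAbove, Fin.succAbove_lt_succAbove_iff] at hpq hp hq ⊢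
          rw [succAbove_val] at hp hq
          apply h₁ k r hpq <;> split_ifs at hp hq <;> omega
    · intro p q hpq hp hq
      induction p using Fin.succAboveCases ℓ with
      | x => rw [permInsert_apply_self] at hp; omega
      | p k =>
        induction q using Fin.succAboveCases ℓ with
        | x => rw [permInsert_apply_self] at hq; omega
        | p r =>
          simp only [permInsert_apply_succAbove, Fin.succAbove_lt_succAbove_iff] at hpq hp hq ⊢
          rw [succAbove_val] at hp hq
          apply h₂ k r hpq <;> split_ifs at hp hq <;> omega

theorem prevIdx_eq_succAbove {n : ℕ} (ℓ : Fin (n + 1)) (k : Fin n) (hk : (k : ℕ) + 1 = ℓ) :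
    prevIdx ℓ = ℓ.succAbove k := by
  apply Fin.ext
  rw [succAbove_val, if_pos (by omega)]
  simp only [prevIdx]
  omega

theorem mem_shuffleA3_permInsert_iff {i j : ℕ} (ℓ m : Fin (i + j + 2))
    (φ : Equiv.Perm (Fin (i + j + 1))) (hm : (m : ℕ) ≤ i) :
    (ℓ, permInsert ℓ m φ) ∈ shuffleA3 i j ↔
      IsShuffleBlocks i φ ∧ (∀ k, (φ k : ℕ) < i → ((k : ℕ) < ℓ ↔ (φ k : ℕ) < m)) ∧
        ∀ k : Fin (i + j + 1), (k : ℕ) + 1 = ℓ → (φ k : ℕ) < i := by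
  simp only [shuffleA3, Set.mem_ofPred_eq, permInsert_apply_self,
    isShuffleBlocks_permInsert_iff ℓ m φ hm, and_assoc, hm, and_true]
  refine and_congr_right fun _ => and_congr_right fun hlt => ⟨fun h k hk => ?_, fun h hℓ => ?_⟩
  · have := h (by omega)
    rw [prevIdx_eq_succAbove ℓ k hk, permInsert_apply_succAbove, succAbove_val] at this
    split_ifs at this <;> omega
  · have hk : ((⟨ℓ - 1, by omega⟩ : Fin (i + j + 1)) : ℕ) + 1 = ℓ := by simp; omega
    have := h _ hk
    rw [prevIdx_eq_succAbove ℓ _ hk, permInsert_apply_succAbove, succAbove_val]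
    split_ifs <;> omega

/-- There is exactly one position at which the value `m` can be inserted into the shuffle `φ`
directly after a first-block value or at the very beginning. -/
theorem existsUnique_insertion_position {n t : ℕ} (m : Fin (n + 1)) (φ : Equiv.Perm (Fin n))
    (hm : (m : ℕ) ≤ t) (hφ : IsShuffleBlocks t φ) :
    ∃! ℓ : Fin (n + 1), (∀ k, (φ k : ℕ) < t → ((k : ℕ) < ℓ ↔ (φ k : ℕ) < m)) ∧
      ∀ k : Fin n, (k : ℕ) + 1 = ℓ → (φ k : ℕ) < t := by
  refine existsUnique_of_exists_of_unique ?_ ?_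
  · rcases Nat.eq_zero_or_pos (m : ℕ) with h0 | hpos
    · exact ⟨0, fun k _ => by simp [h0], fun k hk => by simp at hk⟩
    · obtain ⟨r, hr⟩ : ∃ r, φ r = ⟨m - 1, by omega⟩ := φ.surjective _
      have hr' : (φ r : ℕ) = m - 1 := by rw [hr]
      refine ⟨r.succ, fun k hk => ?_, fun k hk => ?_⟩
      · rw [Fin.val_succ]
        rcases lt_trichotomy k r with h | h | h
        · have := hφ.1 k r h hk (by omega)
          simp only [Fin.lt_def] at this h
          omega
        · subst h
          omega
        · have := hφ.1 r k h (by omega) hk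
          simp only [Fin.lt_def] at this h
          omega
      · obtain rfl : k = r := by
          rw [Fin.val_succ] at hk
          exact Fin.ext (by omega)
        omega
  · have key (a b : Fin (n + 1)) (ha : ∀ k, (φ k : ℕ) < t → ((k : ℕ) < a ↔ (φ k : ℕ) < m))
        (hb : ∀ k, (φ k : ℕ) < t → ((k : ℕ) < b ↔ (φ k : ℕ) < m))
        (hb' : ∀ k : Fin n, (k : ℕ) + 1 = b → (φ k : ℕ) < t) : b ≤ a := by
      by_contra! hab
      rw [Fin.lt_def] at hab
      obtain ⟨k, hk⟩ : ∃ k : Fin n, (k : ℕ) + 1 = b :=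
        ⟨⟨b - 1, by omega⟩, by simp only; omega⟩
      have := hb' k hk
      have := ha k this
      have := hb k (by assumption)
      omega
    rintro a b ⟨ha, ha'⟩ ⟨hb, hb'⟩
    exact le_antisymm (key b a hb ha ha') (key a b ha hb hb')

theorem mdel_tauMul {n : ℕ} (ℓ : Fin (n + 1)) (a : Fin (n + 1) → L)
    (h : ∀ k : Fin n, (k : ℕ) + 1 = ℓ → a ℓ ≤ a (ℓ.succAbove k)) :
    mdel L ℓ (tauMul L a) = tauMul L (a ∘ ℓ.succAbove) := by
  refine Subtype.ext (funext fun r => le_antisymm ?_ ?_)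
  · refine Finset.sup'_le Finset.nonempty_Ici _ fun s hs => ?_
    rw [Finset.mem_Ici] at hs
    induction s using Fin.succAboveCases ℓ with
    | x =>
      rw [Fin.le_def, succAbove_val] at hs
      have hr : (r : ℕ) < ℓ := by split_ifs at hs <;> omega
      have hk : ((⟨ℓ - 1, by omega⟩ : Fin n) : ℕ) + 1 = ℓ := by simp only; omega
      refine (h _ hk).trans (Finset.le_sup' (a ∘ ℓ.succAbove) (Finset.mem_Ici.mpr ?_))
      rw [Fin.le_def]
      omega
    | p k =>
      exact Finset.le_sup' (a ∘ ℓ.succAbove)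
        (Finset.mem_Ici.mpr (Fin.succAbove_le_succAbove_iff.mp hs))
  · refine Finset.sup'_le Finset.nonempty_Ici _ fun s hs => ?_
    exact Finset.le_sup' a (Finset.mem_Ici.mpr
      (Fin.succAbove_le_succAbove_iff.mpr (Finset.mem_Ici.mp hs)))

theorem concatT_le_of_first_block {a b n : ℕ} (h : a + b = n) {u : Fin a → L} (hu : Antitone u)
    (v : Fin b → L) {r s : Fin n} (hrs : r ≤ s) (hs : (s : ℕ) < a) :
    concatT L h u v s ≤ concatT L h u v r := by
  have hr : (r : ℕ) < a := lt_of_le_of_lt hrs hs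
  simp only [concatT, hr, hs, dif_pos]
  exact hu hrs

/-- For `(ℓ, σ) ∈ A₃`, deleting the `ℓ`-th entry commutes with `τ` on `(c · c')_σ`. -/
theorem mdel_tauMul_concatT_comp {i j : ℕ} (c : MChain L (i + 1)) (c' : MChain L (j + 1))
    {p : Fin (i + j + 2) × Equiv.Perm (Fin (i + j + 2))} (hp : p ∈ shuffleA3 i j)
    (h : i + 1 + (j + 1) = i + j + 2) :
    mdel L p.1 (tauMul L (concatT L h c.1 c'.1 ∘ p.2)) =
      tauMul L ((concatT L h c.1 c'.1 ∘ p.2) ∘ p.1.succAbove) := by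
  obtain ⟨hσ, hprev, hℓ⟩ := hp
  refine mdel_tauMul L p.1 _ fun k hk => ?_
  have hpk := hprev (by omega)
  rw [prevIdx_eq_succAbove _ k hk] at hpk
  refine concatT_le_of_first_block L h c.2 c'.1 ?_ (by omega)
  refine (hσ.1 _ _ ?_ (by omega) (by omega)).le
  rw [Fin.lt_def, succAbove_val, if_pos (by omega)]
  omega

theorem omegaRel_iff {i j : ℕ} (ℓ : Fin (i + j + 2)) (σ : Equiv.Perm (Fin (i + j + 2)))
    (m : Fin (i + 1)) (φ : Equiv.Perm (Fin (i + j + 1))) :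
    omegaRel i j ℓ σ m φ ↔ σ = permInsert ℓ (Fin.castLE (by omega) m) φ :=
  succAbove_comp_eq_iff _ _ _ _

/-- For `i, j ≥ 0`:
(i) the relation `φ ∘ ∂_{i+j+1}^{(m)} = ∂_{i+j+1}^{(ℓ)} ∘ σ` determines a well-defined map
`Ω_{i,j} : A₃^{i,j} → {0,…,i} × S_{i-1,j}`, and it is a bijection (each `(ℓ,σ) ∈ A₃^{i,j}`
has a unique solution `(m,φ)`, and conversely);
(ii) whenever `Ω_{i,j}(ℓ,σ) = (m,φ)` one has `(-1)^ℓ sgn(σ) = (-1)^m sgn(φ)`;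
(iii) for every `i`-multichain `c`, `j`-multichain `c′` in the finite lattice `L`, and
`(ℓ,σ) ∈ A₃^{i,j}` with `Ω_{i,j}(ℓ,σ) = (m,φ)`,
`∂_{i+j+1}^{(ℓ)}[τ((c·c′)_σ)] = τ(∂_{i+j+1}^{(ℓ)}[(c·c′)_σ]) = τ((∂_{i+j+1}^{(m)}(c·c′))_φ)`. -/
theorem omega_bijection_A3 [Fintype L] (i j : ℕ) :
    (∀ p ∈ shuffleA3 i j,
        ∃! mφ : Fin (i + 1) × Equiv.Perm (Fin (i + j + 1)),
          IsShuffleBlocks i mφ.2 ∧ omegaRel i j p.1 p.2 mφ.1 mφ.2) ∧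
    (∀ mφ : Fin (i + 1) × Equiv.Perm (Fin (i + j + 1)), IsShuffleBlocks i mφ.2 →
        ∃! p : Fin (i + j + 2) × Equiv.Perm (Fin (i + j + 2)),
          p ∈ shuffleA3 i j ∧ omegaRel i j p.1 p.2 mφ.1 mφ.2) ∧
    (∀ p ∈ shuffleA3 i j, ∀ mφ : Fin (i + 1) × Equiv.Perm (Fin (i + j + 1)),
        IsShuffleBlocks i mφ.2 → omegaRel i j p.1 p.2 mφ.1 mφ.2 →
        ((-1 : ℤˣ) ^ ((p.1 : ℕ)) * Equiv.Perm.sign p.2 =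
          (-1 : ℤˣ) ^ ((mφ.1 : ℕ)) * Equiv.Perm.sign mφ.2)) ∧
    (∀ (c : MChain L (i + 1)) (c' : MChain L (j + 1))
        (p : Fin (i + j + 2) × Equiv.Perm (Fin (i + j + 2))), p ∈ shuffleA3 i j →
        ∀ mφ : Fin (i + 1) × Equiv.Perm (Fin (i + j + 1)),
        IsShuffleBlocks i mφ.2 → omegaRel i j p.1 p.2 mφ.1 mφ.2 →
        (mdel L p.1 (tauMul L (concatT L (by omega) c.1 c'.1 ∘ ⇑p.2)) =
            tauMul L ((concatT L (by omega) c.1 c'.1 ∘ ⇑p.2) ∘ p.1.succAbove) ∧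
          tauMul L ((concatT L (by omega) c.1 c'.1 ∘ ⇑p.2) ∘ p.1.succAbove) =
            tauMul L ((concatT L (by omega) c.1 c'.1 ∘
              (Fin.castLE (by omega) mφ.1).succAbove) ∘ ⇑mφ.2))) := by
  refine ⟨?_, ?_, ?_, ?_⟩
  · rintro ⟨ℓ, σ⟩ hp
    obtain ⟨φ, hφ⟩ := exists_eq_permInsert ℓ σ
    have hm : (σ ℓ : ℕ) ≤ i := hp.2.2
    have hmem := hp
    rw [hφ, mem_shuffleA3_permInsert_iff _ _ _ hm] at hmem
    refine ⟨(⟨σ ℓ, by omega⟩, φ), ⟨hmem.1, (omegaRel_iff _ _ _ _).mpr hφ⟩, ?_⟩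
    rintro ⟨m', φ'⟩ ⟨-, hrel⟩
    replace hrel := (omegaRel_iff ℓ σ m' φ').mp hrel
    have hm' : σ ℓ = Fin.castLE (by omega) m' := by
      rw [hrel]
      exact permInsert_apply_self _ _ _
    refine Prod.ext (Fin.ext (congrArg Fin.val hm').symm) ?_
    rw [← hm', hφ, permInsert_apply_self] at hrel
    exact (permInsert_right_injective _ _ hrel).symm
  · rintro ⟨m, φ⟩ hφ
    have hm : ((Fin.castLE (by omega) m : Fin (i + j + 2)) : ℕ) ≤ i := Nat.le_of_lt_succ m.2
    obtain ⟨ℓ, hℓ, huniq⟩ := existsUnique_insertion_position _ φ hm hφ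
    refine ⟨(ℓ, permInsert ℓ (Fin.castLE (by omega) m) φ),
      ⟨(mem_shuffleA3_permInsert_iff _ _ _ hm).mpr ⟨hφ, hℓ⟩, (omegaRel_iff _ _ _ _).mpr rfl⟩, ?_⟩
    rintro ⟨ℓ', σ'⟩ ⟨hp, hrel⟩
    obtain rfl := (omegaRel_iff ℓ' σ' m φ).mp hrel
    obtain rfl := huniq ℓ' ((mem_shuffleA3_permInsert_iff _ _ _ hm).mp hp).2
    rfl
  · rintro ⟨ℓ, σ⟩ - ⟨m, φ⟩ - hrel
    obtain rfl := (omegaRel_iff ℓ σ m φ).mp hrel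
    rw [sign_permInsert, mul_comm, mul_assoc, ← mul_pow]
    simp
  · intro c c' p hp mφ _ hrel
    exact ⟨mdel_tauMul_concatT_comp L c c' hp _,
      congrArg (fun f => tauMul L (concatT L (by omega) c.1 c'.1 ∘ f)) hrel.symm⟩

end
end
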